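/- arXiv:2109.07209 — 6 statements merged into one kernel-verified Lean document; each statement's English description precedes it below -/
import Mathlib

section
/- For all integers n ≥ 0, α ≥ 0, β ≥ 0 and every j ∈ {0, 2, 3, 4}, the number of (4,8)-regular overpartitions satisfies p̄_{4,8}( 8 · 5^{2α+1} · 7^{2β} · (5n + j) + 7 · 5^{2α+1} · 7^{2β} ) ≡ 0 (mod 16). -/
/-- The number of `(j,k)`-regular overpartitions of `n`: pairs `(λ, μ)` where `λ` is a
partition of some `m ≤ n` into distinct parts, `μ` is a partition of `n - m`, and no part
of `λ` or `μ` is congruent to `j` modulo `k`. -/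
def regularOverpartitions (j k n : ℕ) : ℕ :=
  ∑ m ∈ Finset.range (n + 1),
    ((Nat.Partition.distincts m).filter (fun lam => ∀ i ∈ lam.parts, i % k ≠ j)).card *
    ((Finset.univ : Finset (Nat.Partition (n - m))).filter
      (fun mu => ∀ i ∈ mu.parts, i % k ≠ j)).card

theorem nt_aux (a : ℕ) : ∀ (m x y : ℕ), ¬ 5 ∣ m → x ^ 2 + 2 * y ^ 2 ≠ 5 ^ (2 * a + 1) * m := by
  have key : ∀ x y : ℕ, 5 ∣ x ^ 2 + 2 * y ^ 2 → 5 ∣ x ∧ 5 ∣ y := by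
    intro x y h
    have h2 : ∀ u v : ZMod 5, u ^ 2 + 2 * v ^ 2 = 0 → u = 0 ∧ v = 0 := by decide
    rw [← ZMod.natCast_eq_zero_iff] at h
    push_cast at h
    have := h2 _ _ h
    rwa [ZMod.natCast_eq_zero_iff, ZMod.natCast_eq_zero_iff] at this
  induction a with
  | zero =>
    intro m x y hm h
    obtain ⟨⟨u, rfl⟩, ⟨v, rfl⟩⟩ := key x y (by rw [h]; exact ⟨m, by ring⟩)
    exact hm ⟨u ^ 2 + 2 * v ^ 2, by norm_num at h; linarith⟩
  | succ a ih =>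
    intro m x y hm h
    obtain ⟨⟨u, rfl⟩, ⟨v, rfl⟩⟩ := key x y (by rw [h]; exact ⟨5 ^ (2 * a + 2) * m, by ring⟩)
    refine ih m u v hm ?_
    have : 25 * (u ^ 2 + 2 * v ^ 2) = 25 * (5 ^ (2 * a + 1) * m) := by
      rw [show 2 * (a + 1) + 1 = (2 * a + 1) + 2 by ring, pow_add] at h
      linarith
    omega

section Shanks
variable {R : Type*} [CommRing R]

def shW (x : R) (n s : ℕ) : R :=
  (-1) ^ s * x ^ (s * (n + 1)) * (∏ i ∈ Finset.Ico s n, (1 - x ^ (i + 1))) *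
    ∏ i ∈ Finset.range s, (1 + x ^ i)

theorem shW_succ_left (x : R) {n s : ℕ} (h : s ≤ n) :
    shW x (n + 1) s = x ^ s * (1 - x ^ (n + 1)) * shW x n s := by
  unfold shW
  rw [Finset.prod_Ico_succ_top h]
  ring

theorem shW_succ_right (x : R) {n k : ℕ} (h : k < n) :
    shW x n (k + 1) * (1 - x ^ (k + 1)) = - x ^ (n + 1) * (1 + x ^ k) * shW x n k := by
  unfold shW
  rw [Finset.prod_range_succ, Finset.prod_eq_prod_Ico_succ_bot h]
  ring

theorem shW_partial (x : R) (n k : ℕ) (h : k ≤ n) :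
    ∑ s ∈ Finset.range (k + 1), (shW x (n + 1) s - (1 + x ^ (n + 1)) * shW x n s)
      = - shW x n k * x ^ (n + 1) * (1 + x ^ k) := by
  induction k with
  | zero =>
    simp only [zero_add, Finset.sum_range_one]
    rw [shW_succ_left x (Nat.zero_le _)]
    ring
  | succ k ih =>
    rw [Finset.sum_range_succ, ih (by omega), shW_succ_left x h]
    have := shW_succ_right x (n := n) (k := k) (by omega)
    linear_combination -this

theorem shanks (x : R) (n : ℕ) :
    (∏ i ∈ Finset.range n, (1 + x ^ (i + 1))) *
      (1 + 2 * ∑ j ∈ Finset.range n, (-1) ^ (j + 1) * x ^ ((j + 1) ^ 2))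
      = ∑ s ∈ Finset.range (n + 1), shW x n s := by
  induction n with
  | zero => simp [shW]
  | succ n ih =>
    have h1 := shW_partial x n n le_rfl
    rw [Finset.sum_sub_distrib, ← Finset.mul_sum, ← ih] at h1
    rw [Finset.sum_range_succ (fun s => shW x (n + 1) s), eq_add_of_sub_eq h1]
    rw [Finset.prod_range_succ, Finset.sum_range_succ]
    have h2 : (∏ i ∈ Finset.range (n + 1), (1 + x ^ i))
        = 2 * ∏ i ∈ Finset.range n, (1 + x ^ (i + 1)) := by
      rw [Finset.prod_range_succ']; ring
    have h3 : shW x (n + 1) (n + 1) = (-1) ^ (n + 1) * x ^ ((n + 1) * (n + 2)) *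
        (2 * ∏ i ∈ Finset.range n, (1 + x ^ (i + 1))) := by
      unfold shW; rw [h2]; simp
    have h4 : shW x n n * (1 + x ^ n) = (-1) ^ n * x ^ (n * (n + 1)) *
        (2 * ∏ i ∈ Finset.range n, (1 + x ^ (i + 1))) := by
      unfold shW; rw [← h2, Finset.prod_range_succ]; simp; ring
    rw [h3]
    linear_combination (x ^ (n + 1)) * h4

theorem shanks_dvd (x : R) (n : ℕ) :
    x ^ (n + 1) ∣ (∏ i ∈ Finset.range n, (1 + x ^ (i + 1))) *
      (1 + 2 * ∑ j ∈ Finset.range n, (-1) ^ (j + 1) * x ^ ((j + 1) ^ 2))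
      - ∏ i ∈ Finset.range n, (1 - x ^ (i + 1)) := by
  rw [shanks, Finset.sum_range_succ']
  have : shW x n 0 = ∏ i ∈ Finset.range n, (1 - x ^ (i + 1)) := by
    simp [shW]
  rw [this, add_sub_cancel_right]
  refine Finset.dvd_sum fun s _ => ?_
  unfold shW
  refine Dvd.dvd.mul_right (Dvd.dvd.mul_right (Dvd.dvd.mul_left ?_ _) _) _
  exact pow_dvd_pow _ (by nlinarith)

end Shanks

section GF
open PowerSeries PowerSeries.WithPiTopology Nat.Partition Finset

theorem coeff_even_aux {N a m M : ℕ} (hN : N = 5 ^ (2 * a + 1) * m) (hm : ¬ 5 ∣ m) :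
    (coeff N ((∑ j ∈ range M, (X : (ZMod 2)⟦X⟧) ^ ((j + 1) ^ 2)) ^ 3)) = 0 := by
  have h2 : (∑ j ∈ range M, (X : (ZMod 2)⟦X⟧) ^ ((j + 1) ^ 2)) ^ 2
      = ∑ j ∈ range M, (X : (ZMod 2)⟦X⟧) ^ (2 * (j + 1) ^ 2) := by
    have : CharP (ZMod 2)⟦X⟧ 2 := charP_of_injective_algebraMap
      (algebraMap (ZMod 2) (ZMod 2)⟦X⟧).injective 2
    rw [CharTwo.sum_sq]
    refine sum_congr rfl fun j _ => ?_
    ring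
  rw [pow_succ', h2, Finset.sum_mul_sum, map_sum]
  refine sum_eq_zero fun i _ => ?_
  rw [map_sum]
  refine sum_eq_zero fun j _ => ?_
  rw [← pow_add, coeff_X_pow, if_neg]
  intro h
  exact nt_aux a m (i + 1) (j + 1) hm (by rw [← hN, h])

def Supp4 (A : Finset (ZMod 4)) (f : ℤ⟦X⟧) : Prop := ∀ n : ℕ, coeff n f ≠ 0 → (n : ZMod 4) ∈ A

open scoped Pointwise in
theorem Supp4.mul {A B : Finset (ZMod 4)} {f g : ℤ⟦X⟧} (hf : Supp4 A f) (hg : Supp4 B g) :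
    Supp4 (A + B) (f * g) := by
  intro n hn
  rw [coeff_mul] at hn
  obtain ⟨p, hp, h⟩ := exists_ne_zero_of_sum_ne_zero hn
  rw [HasAntidiagonal.mem_antidiagonal] at hp
  rw [← hp, Nat.cast_add]
  exact add_mem_add (hf _ (left_ne_zero_of_mul h)) (hg _ (right_ne_zero_of_mul h))

theorem Supp4_expand (f : ℤ⟦X⟧) : Supp4 {0} (expand 4 (by norm_num) f) := by
  intro n hn
  rw [coeff_expand] at hn
  rw [mem_singleton, ZMod.natCast_eq_zero_iff]
  by_contra h
  simp [h] at hn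

theorem Supp4_S (M : ℕ) :
    Supp4 {0, 1} (∑ j ∈ range M, (-1) ^ (j + 1) * (X : ℤ⟦X⟧) ^ ((j + 1) ^ 2)) := by
  intro n hn
  rw [map_sum] at hn
  obtain ⟨j, _, h⟩ := exists_ne_zero_of_sum_ne_zero hn
  have h1 : ((-1) ^ (j + 1) : ℤ⟦X⟧) = C ((-1) ^ (j + 1) : ℤ) := by simp
  rw [h1, coeff_C_mul, coeff_X_pow] at h
  have : n = (j + 1) ^ 2 := by
    by_contra h'
    simp [h'] at h
  rw [this, Nat.cast_pow]
  generalize ((j + 1 : ℕ) : ZMod 4) = t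
  revert t; decide

/-- generating functions -/
theorem gf_exists (N : ℕ) : ∃ M, N ≤ M ∧ ∃ U V D : ℤ⟦X⟧,
    U * V = 1 ∧
    V = ∏ i ∈ range M, (if (i + 1) % 8 ≠ 4 then 1 - X ^ (i + 1) else 1) ∧
    D = ∏ i ∈ range M, (if (i + 1) % 8 ≠ 4 then 1 + X ^ (i + 1) else 1) ∧
    (regularOverpartitions 4 8 N : ℤ) = coeff N (D * U) := by
  have hD : HasProd (fun i ↦ if (i + 1) % 8 ≠ 4 then 1 + (X : ℤ⟦X⟧) ^ (i + 1) else 1)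
    (PowerSeries.mk fun n ↦ (#((distincts n).filter
      (fun lam => ∀ i ∈ lam.parts, i % 8 ≠ 4)) : ℤ)) := by
    convert! hasProd_genFun (fun i c ↦ if c < 2 ∧ i % 8 ≠ 4 then (1 : ℤ) else 0) using 1
    · ext1 i
      rw [tsum_eq_single 0]
      · by_cases h : (i + 1) % 8 = 4
        · simp only [h]; simp; exact zero_smul _ _
        · simp [h]; exact (one_smul _ _).symm
      · intro b hb
        rw [if_neg (by omega)]; exact zero_smul _ _
    · simp_rw [genFun, ← countRestricted_two, countRestricted, filter_filter, card_filter,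
        Finsupp.prod, prod_boole]
      ext n
      simp [forall_and]
  have hU := hasProd_powerSeriesMk_card_restricted ℤ (fun i => i % 8 ≠ 4)
  have hD' := hD.tendsto_prod_nat
  have hU' := hU.tendsto_prod_nat
  rw [tendsto_iff_coeff_tendsto] at hD' hU'
  simp only [nhds_discrete, Filter.tendsto_pure] at hD' hU'
  have e1 := (Filter.eventually_all_finset (range (N + 1))).2 (fun d _ => hD' d)
  have e2 := (Filter.eventually_all_finset (range (N + 1))).2 (fun d _ => hU' d)
  obtain ⟨M, ⟨h1, h2⟩, h3⟩ := ((e1.and e2).and (Filter.eventually_ge_atTop N)).exists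
  refine ⟨M, h3, ∏ i ∈ range M, (if (i + 1) % 8 ≠ 4 then ∑' j : ℕ, X ^ ((i + 1) * j) else 1),
    _, _, ?_, rfl, rfl, ?_⟩
  · rw [← prod_mul_distrib]
    refine prod_eq_one fun i _ => ?_
    split_ifs
    · simp_rw [pow_mul]
      exact tsum_pow_mul_one_sub_of_constantCoeff_eq_zero (by simp)
    · simp
  · rw [coeff_mul, Finset.Nat.sum_antidiagonal_eq_sum_range_succ_mk, regularOverpartitions]
    push_cast
    refine sum_congr rfl fun m hm => ?_
    rw [h1 m hm, h2 (N - m) (by rw [mem_range]; omega)]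
    simp [restricted]

theorem main_aux {N a m : ℕ} (hN : N = 5 ^ (2 * a + 1) * m) (hm : ¬ 5 ∣ m) (h4 : N % 4 = 3) :
    (16 : ℤ) ∣ regularOverpartitions 4 8 N := by
  obtain ⟨M, hM, U, V, D, hUV, hV, hD, hf⟩ := gf_exists N
  rw [hf]
  set S : ℤ⟦X⟧ := ∑ j ∈ range M, (-1) ^ (j + 1) * (X : ℤ⟦X⟧) ^ ((j + 1) ^ 2) with hS
  let D1 : ℤ⟦X⟧ := ∏ i ∈ range M, (if (i + 1) % 8 ≠ 4 then 1 else 1 + X ^ ((i + 1) / 4))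
  let V1 : ℤ⟦X⟧ := ∏ i ∈ range M, (if (i + 1) % 8 ≠ 4 then 1 else 1 - X ^ ((i + 1) / 4))
  have hc : constantCoeff D1 = ((1 : ℤˣ) : ℤ) := by
    simp only [D1, map_prod]
    refine prod_eq_one fun i _ => ?_
    split_ifs with h
    · simp
    · have : (i + 1) / 4 ≠ 0 := by omega
      simp [this]
  let E1 := invOfUnit D1 1
  have hE1 : D1 * E1 = 1 := mul_invOfUnit D1 1 hc
  let ex := expand (R := ℤ) 4 (by norm_num)
  have hDD : D * ex D1 = ∏ i ∈ range M, (1 + X ^ (i + 1)) := by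
    rw [hD, map_prod, ← prod_mul_distrib]
    refine prod_congr rfl fun i _ => ?_
    split_ifs with h
    · simp
    · simp only [map_add, map_one, map_pow, ex, expand_X, ← pow_mul]
      rw [Nat.mul_div_cancel' (by omega), one_mul]
  have hVV : V * ex V1 = ∏ i ∈ range M, (1 - X ^ (i + 1)) := by
    rw [hV, map_prod, ← prod_mul_distrib]
    refine prod_congr rfl fun i _ => ?_
    split_ifs with h
    · simp
    · simp only [map_sub, map_one, map_pow, ex, expand_X, ← pow_mul]
      rw [Nat.mul_div_cancel' (by omega), one_mul]
  have hsh := shanks_dvd (X : ℤ⟦X⟧) M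
  rw [← hDD, ← hVV, ← hS] at hsh
  have hexE : ex D1 * ex E1 = 1 := by rw [← map_mul, hE1, map_one]
  set G := ex (V1 * E1) with hG
  have hGe : G = ex V1 * ex E1 := map_mul _ _ _
  have hdv : (X : ℤ⟦X⟧) ^ (M + 1) ∣ D * U * (1 - 16 * S ^ 4)
      - G * (1 - 2 * S + 4 * S ^ 2 - 8 * S ^ 3) := by
    obtain ⟨Q, hQ⟩ := hsh
    refine ⟨Q * U * ex E1 * (1 - 2 * S + 4 * S ^ 2 - 8 * S ^ 3), ?_⟩
    rw [hGe]
    have : D * (1 + 2 * S) = V * ex V1 * ex E1 + X ^ (M + 1) * Q * ex E1 := by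
      linear_combination (ex E1) * hQ - D * (1 + 2 * S) * hexE
    linear_combination (U * (1 - 2 * S + 4 * S ^ 2 - 8 * S ^ 3)) * this +
      (ex V1 * ex E1 * (1 - 2 * S + 4 * S ^ 2 - 8 * S ^ 3)) * hUV
  have hco := X_pow_dvd_iff.1 hdv N (by omega)
  have hsG : Supp4 {0} G := Supp4_expand _
  have hsS : Supp4 {0, 1} S := Supp4_S M
  have hN3 : (N : ZMod 4) = 3 := by
    have := ZMod.natCast_mod N 4
    rw [h4] at this
    rw [← this]; rfl
  have z0 : coeff N G = 0 := by
    by_contra h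
    have := hsG _ h
    rw [hN3] at this; revert this; decide
  have z1 : coeff N (G * S) = 0 := by
    by_contra h
    have := (hsG.mul hsS) _ h
    rw [hN3] at this; revert this; decide
  have z2 : coeff N (G * S * S) = 0 := by
    by_contra h
    have := ((hsG.mul hsS).mul hsS) _ h
    rw [hN3] at this; revert this; decide
  have z3 : (2 : ℤ) ∣ coeff N (G * S ^ 3) := by
    have hm2 : PowerSeries.map (Int.castRingHom (ZMod 2)) (G * S ^ 3)
        = (∑ j ∈ range M, (X : (ZMod 2)⟦X⟧) ^ ((j + 1) ^ 2)) ^ 3 := by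
      have t1 : PowerSeries.map (Int.castRingHom (ZMod 2)) V1
          = PowerSeries.map (Int.castRingHom (ZMod 2)) D1 := by
        simp only [V1, D1, map_prod]
        refine prod_congr rfl fun i _ => ?_
        split_ifs
        · rfl
        · have : CharP (ZMod 2)⟦X⟧ 2 := charP_of_injective_algebraMap
            (algebraMap (ZMod 2) (ZMod 2)⟦X⟧).injective 2
          simp only [map_sub, map_add, CharTwo.sub_eq_add]
      have t2 : PowerSeries.map (Int.castRingHom (ZMod 2)) G = 1 := by
        rw [hG]
        simp only [ex]
        rw [map_expand, map_mul, t1, ← map_mul, hE1, map_one, map_one]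
      rw [map_mul, t2, one_mul, map_pow, hS, map_sum]
      congr 1
      refine sum_congr rfl fun j _ => ?_
      have : CharP (ZMod 2)⟦X⟧ 2 := charP_of_injective_algebraMap
        (algebraMap (ZMod 2) (ZMod 2)⟦X⟧).injective 2
      simp [CharTwo.neg_eq]
    have := coeff_even_aux (M := M) hN hm
    rw [← hm2, coeff_map] at this
    exact (ZMod.intCast_zmod_eq_zero_iff_dvd _ 2).1 this
  obtain ⟨c, hcc⟩ := z3
  have e : D * U * (1 - 16 * S ^ 4) - G * (1 - 2 * S + 4 * S ^ 2 - 8 * S ^ 3)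
      = D * U - C (16 : ℤ) * (D * U * S ^ 4) - G + C (2 : ℤ) * (G * S) - C (4 : ℤ) * (G * S * S)
        + C (8 : ℤ) * (G * S ^ 3) := by
    simp only [map_ofNat]
    ring
  rw [e] at hco
  simp only [map_add, map_sub, coeff_C_mul, z0, z1, z2, hcc] at hco
  exact ⟨coeff N (D * U * S ^ 4) - c, by linarith⟩

end GF

theorem stmt_14 (n α β : ℕ) (j : ℕ) (hj : j ∈ ({0, 2, 3, 4} : Finset ℕ)) :
    16 ∣ regularOverpartitions 4 8
        (8 * 5 ^ (2 * α + 1) * 7 ^ (2 * β) * (5 * n + j)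
          + 7 * 5 ^ (2 * α + 1) * 7 ^ (2 * β)) := by
  have hj' : j = 0 ∨ j = 2 ∨ j = 3 ∨ j = 4 := by simpa using hj
  have h := main_aux (N := 8 * 5 ^ (2 * α + 1) * 7 ^ (2 * β) * (5 * n + j)
          + 7 * 5 ^ (2 * α + 1) * 7 ^ (2 * β)) (a := α)
          (m := 7 ^ (2 * β) * (8 * (5 * n + j) + 7)) (by ring) ?_ ?_
  · exact_mod_cast h
  · intro h
    rcases (Nat.Prime.dvd_mul (by norm_num)).1 h with h | h
    · have := Nat.Prime.dvd_of_dvd_pow (by norm_num) h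
      omega
    · omega
  · have h5 : 5 ^ (2 * α + 1) % 4 = 1 := by rw [Nat.pow_mod]; simp
    have h7 : 7 ^ (2 * β) % 4 = 1 := by rw [pow_mul, Nat.pow_mod]; simp
    have : 7 * 5 ^ (2 * α + 1) * 7 ^ (2 * β) % 4 = 3 := by
      rw [Nat.mul_mod, Nat.mul_mod 7, h5, h7]
    rw [show 8 * 5 ^ (2 * α + 1) * 7 ^ (2 * β) * (5 * n + j)
      = 4 * (2 * 5 ^ (2 * α + 1) * 7 ^ (2 * β) * (5 * n + j)) by ring]
    omega
end

section
/- For all integers n ≥ 0, α ≥ 0, β ≥ 0 and every k ∈ {0, 1, 3, 4, 5, 6}, the number of (4,8)-regular overpartitions satisfies p̄_{4,8}( 8 · 5^{2α} · 7^{2β+1} · (7n + k) + 5 · 5^{2α} · 7^{2β+1} ) ≡ 0 (mod 16). -/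
namespace OP
open Finset PowerSeries
open scoped PowerSeries.WithPiTopology

/-- finite form of Gauss' identity -/
lemma gauss_step {R : Type*} [CommRing R] (q : R) (u : ℕ → R)
    (hu : ∀ i, u (i + 1) * (1 + q ^ (i + 1)) = 1) (n : ℕ) :
    1 + ∑ k ∈ range n, 2 * (-1) ^ (k + 1) * q ^ ((k + 1) ^ 2) =
      ∏ i ∈ range n, ((1 - q ^ (i + 1)) * u (i + 1)) +
      ∑ s ∈ range n, 2 * (-1) ^ (s + 1) * q ^ ((s + 1) * (n + 1)) * u (s + 1) *
        ∏ i ∈ Ico (s + 1) n, ((1 - q ^ (i + 1)) * u (i + 1)) := by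
  induction n with
  | zero => simp
  | succ n ih =>
    set r : ℕ → R := fun i => (1 - q ^ (i + 1)) * u (i + 1) with hr
    have key : ∀ s ∈ range n,
        2 * (-1) ^ (s + 1) * q ^ ((s + 1) * (n + 1 + 1)) * u (s + 1) *
          ∏ i ∈ Ico (s + 1) (n + 1), r i =
        2 * (-1) ^ (s + 1) * q ^ ((s + 1) * (n + 1)) * u (s + 1) *
          ∏ i ∈ Ico (s + 1) n, r i +
        (2 * (-1) ^ s * (∏ i ∈ Ico s n, r i) * q ^ ((s + 1) * (n + 1)) * u (n + 1) -
         2 * (-1) ^ (s + 1) * (∏ i ∈ Ico (s + 1) n, r i) * q ^ ((s + 1 + 1) * (n + 1))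
          * u (n + 1)) := by
      intro s hs
      have hs' : s < n := mem_range.1 hs
      rw [Finset.prod_Ico_succ_top (by omega : s + 1 ≤ n),
        Finset.prod_eq_prod_Ico_succ_bot hs']
      generalize ∏ i ∈ Ico (s + 1) n, r i = P
      have h1 := hu s
      have h2 := hu n
      simp only [hr]
      have e1 : q ^ ((s + 1) * (n + 1 + 1)) = q ^ ((s + 1) * (n + 1)) * q ^ (s + 1) := by ring
      have e2 : q ^ ((s + 1 + 1) * (n + 1)) = q ^ ((s + 1) * (n + 1)) * q ^ (n + 1) := by ring
      rw [e1, e2]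
      generalize q ^ ((s + 1) * (n + 1)) = Z
      generalize q ^ (s + 1) = a at *
      generalize q ^ (n + 1) = b at *
      generalize u (s + 1) = x at *
      generalize u (n + 1) = y at *
      rw [pow_succ]
      generalize (-1 : R) ^ s = e
      linear_combination (-2 * e * Z * P * x) * h2 - (-2 * e * Z * P * y * b) * h1
    have base : ∀ f : ℕ → R, ∏ i ∈ range n, f i = ∏ i ∈ Ico 0 n, f i := by
      intro f; rw [Nat.Ico_zero_eq_range]
    rw [sum_range_succ, sum_range_succ, sum_congr rfl key, sum_add_distrib, sum_range_sub',
      prod_range_succ, ← add_assoc, ih]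
    simp only [Ico_self, prod_empty, Nat.Ico_zero_eq_range]
    have h2 := hu n
    have e1 : q ^ ((n + 1) * (n + 1 + 1)) = q ^ ((n + 1) ^ 2) * q ^ (n + 1) := by ring
    have e2 : q ^ ((n + 1) * (n + 1)) = q ^ ((n + 1) ^ 2) := by ring
    rw [e1, e2]
    simp only [hr]
    generalize q ^ ((n + 1) ^ 2) = Z
    simp only [zero_add, one_mul, pow_zero, mul_one]
    generalize ∏ i ∈ range n, ((1 - q ^ (i + 1)) * u (i + 1)) = P
    generalize q ^ (n + 1) = b at *
    generalize u (n + 1) = y at *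
    rw [pow_succ]
    generalize (-1 : R) ^ n = e
    linear_combination (2 * e * Z - P) * h2

abbrev S := PowerSeries (ZMod 16)

noncomputable def w (i : ℕ) : S := invOfUnit (1 + X ^ i) 1

lemma hw (i : ℕ) : w (i + 1) * (1 + X ^ (i + 1)) = 1 := by
  rw [mul_comm]
  exact mul_invOfUnit _ _ (by simp)

noncomputable def r (i : ℕ) : S := (1 - X ^ i) * w i

lemma gauss (d : ℕ) (n : ℕ) : ∃ E : S,
    ∏ i ∈ range n, r ((d + 1) * (i + 1)) =
      1 + ∑ k ∈ range n, 2 * (-1) ^ (k + 1) * X ^ ((d + 1) * (k + 1) ^ 2) + X ^ (n + 1) * E := by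
  have h := gauss_step (R := S) (X ^ (d + 1)) (fun i => w ((d + 1) * i)) (by
    intro i
    have := hw ((d + 1) * (i + 1) - 1)
    rw [Nat.sub_add_cancel (by nlinarith)] at this
    rw [← pow_mul]; exact this) n
  simp only [← pow_mul] at h
  have h2 : (X ^ (n + 1) : S) ∣ ∑ s ∈ range n, 2 * (-1) ^ (s + 1) *
      X ^ ((d + 1) * ((s + 1) * (n + 1))) * w ((d + 1) * (s + 1)) *
        ∏ i ∈ Ico (s + 1) n, ((1 - X ^ ((d + 1) * (i + 1))) * w ((d + 1) * (i + 1))) := by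
    refine dvd_sum fun s _ => ?_
    refine Dvd.dvd.mul_right (Dvd.dvd.mul_right (Dvd.dvd.mul_left (pow_dvd_pow _ ?_) _) _) _
    have : 1 ≤ (d + 1) * (s + 1) := Nat.mul_pos (by omega) (by omega)
    nlinarith
  obtain ⟨E, hE⟩ := h2
  refine ⟨-E, ?_⟩
  rw [hE] at h
  rw [h]
  simp only [r]
  ring

noncomputable def g (i : ℕ) : S :=
  if (i + 1) % 8 ≠ 4 then (1 + X ^ (i + 1)) * ∑' j : ℕ, X ^ ((i + 1) * j) else 1

lemma g_mul_r (i : ℕ) (h : (i + 1) % 8 ≠ 4) : g i * r (i + 1) = 1 := by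
  rw [g, if_pos h, r]
  have h1 := hw i
  have h2 : (∑' j : ℕ, X ^ ((i + 1) * j) : S) * (1 - X ^ (i + 1)) = 1 := by
    simp_rw [pow_mul]
    exact WithPiTopology.tsum_pow_mul_one_sub_of_constantCoeff_eq_zero (by simp)
  generalize (∑' j : ℕ, X ^ ((i + 1) * j) : S) = v at *
  calc _ = (v * (1 - X ^ (i + 1))) * (w (i + 1) * (1 + X ^ (i + 1))) := by ring
    _ = 1 := by rw [h1, h2, one_mul]

lemma finite_id (m : ℕ) : (∏ i ∈ range (8 * m), g i) * (∏ i ∈ range (8 * m), r (i + 1)) *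
    (∏ i ∈ range m, r (8 * (i + 1))) = ∏ i ∈ range (2 * m), r (4 * (i + 1)) := by
  rw [← prod_mul_distrib]
  induction m with
  | zero => simp
  | succ m ih =>
    have h : ∀ j, j < 8 → j ≠ 3 → g (8 * m + j) * r (8 * m + j + 1) = 1 := by
      intro j h1 h2
      exact g_mul_r _ (by omega)
    have h3 : g (8 * m + 3) = 1 := by
      rw [g, if_neg (by omega)]
    rw [show 8 * (m + 1) = 8 * m + 1 + 1 + 1 + 1 + 1 + 1 + 1 + 1 by ring,
      show 2 * (m + 1) = 2 * m + 1 + 1 by ring]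
    simp only [prod_range_succ]
    rw [← ih]
    have a0 := h 0 (by omega) (by omega)
    have a1 := h 1 (by omega) (by omega)
    have a2 := h 2 (by omega) (by omega)
    have a4 := h 4 (by omega) (by omega)
    have a5 := h 5 (by omega) (by omega)
    have a6 := h 6 (by omega) (by omega)
    have a7 := h 7 (by omega) (by omega)
    simp only [add_zero] at a0
    simp only [add_assoc, Nat.reduceAdd] at *
    rw [a0, a1, a2, a4, a5, a6, a7, h3]
    rw [show 4 * (2 * m + 1) = 8 * m + 4 by ring, show 4 * (2 * m + 2) = 8 * (m + 1) by ring]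
    ring

/-- generating function -/
noncomputable def P : S :=
  (PowerSeries.mk fun n ↦ ((((Nat.Partition.distincts n).filter
    (fun lam => ∀ i ∈ lam.parts, i % 8 ≠ 4)).card : ℕ) : ZMod 16)) *
  (PowerSeries.mk fun n ↦ ((Nat.Partition.restricted n (fun i => i % 8 ≠ 4)).card : ZMod 16))

lemma coeff_P (n : ℕ) : coeff n P = (regularOverpartitions 4 8 n : ZMod 16) := by
  rw [P, coeff_mul, Finset.Nat.sum_antidiagonal_eq_sum_range_succ_mk, regularOverpartitions]
  push_cast
  refine sum_congr rfl fun m _ => ?_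
  simp [Nat.Partition.restricted]

lemma hasProd_dist : HasProd (fun i : ℕ ↦ if (i + 1) % 8 ≠ 4 then (1 + X ^ (i + 1) : S) else 1)
    (PowerSeries.mk fun n ↦ ((((Nat.Partition.distincts n).filter
    (fun lam => ∀ i ∈ lam.parts, i % 8 ≠ 4)).card : ℕ) : ZMod 16)) := by
  convert! Nat.Partition.hasProd_genFun
    (fun i c ↦ if i % 8 ≠ 4 ∧ c < 2 then (1 : ZMod 16) else 0) using 1
  · ext1 i
    rw [tsum_eq_single 0]
    · by_cases h : (i + 1) % 8 ≠ 4 <;> simp [h]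
    · intro b hb
      have : ¬ (b + 1 < 2) := by omega
      simp [hb]
  · ext n
    simp_rw [Nat.Partition.genFun, ← Nat.Partition.countRestricted_two,
      Nat.Partition.countRestricted, filter_filter, card_filter, Finsupp.prod, prod_boole]
    simp only [coeff_mk]
    push_cast
    refine sum_congr rfl fun p _ => ?_
    congr 1
    simp only [Multiset.toFinsupp_support, Multiset.mem_toFinset, Multiset.toFinsupp_apply,
      eq_iff_iff]
    grind

lemma hasProd_P : HasProd g P := by
  have h := hasProd_dist.mul
    (Nat.Partition.hasProd_powerSeriesMk_card_restricted (ZMod 16) (fun i => i % 8 ≠ 4))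
  convert! h using 1
  ext1 i
  by_cases hi : (i + 1) % 8 ≠ 4
  · simp only [g, if_pos hi]
  · simp only [g, if_neg hi, mul_one]

lemma coeff_P_fin (N : ℕ) : ∃ m, N ≤ m ∧ coeff N P = coeff N (∏ i ∈ range (8 * m), g i) := by
  have h := hasProd_P.tendsto_prod_nat
  rw [WithPiTopology.tendsto_iff_coeff_tendsto] at h
  have h2 := h N
  rw [nhds_discrete, Filter.tendsto_pure, Filter.eventually_atTop] at h2
  obtain ⟨M, hM⟩ := h2
  exact ⟨M + N, by omega, (hM _ (by omega)).symm⟩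

/-- exponents in a residue class mod 4 -/
def H (c : ZMod 4) (f : S) : Prop := ∀ n : ℕ, coeff n f ≠ 0 → (n : ZMod 4) = c

lemma H.mul {c d : ZMod 4} {f g : S} (hf : H c f) (hg : H d g) : H (c + d) (f * g) := by
  intro n hn
  rw [coeff_mul] at hn
  obtain ⟨p, hp, hne⟩ := exists_ne_zero_of_sum_ne_zero hn
  rw [← mem_antidiagonal.1 hp, Nat.cast_add, hf _ (left_ne_zero_of_mul hne),
    hg _ (right_ne_zero_of_mul hne)]

lemma H.add {c : ZMod 4} {f g : S} (hf : H c f) (hg : H c g) : H c (f + g) := by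
  intro n hn
  by_cases h : coeff n f = 0
  · exact hg n (by simpa [h] using hn)
  · exact hf n h

lemma H.sum {ι : Type*} {c : ZMod 4} {s : Finset ι} {f : ι → S} (hf : ∀ i ∈ s, H c (f i)) :
    H c (∑ i ∈ s, f i) := by
  intro n hn
  rw [map_sum] at hn
  obtain ⟨p, hp, hne⟩ := exists_ne_zero_of_sum_ne_zero hn
  exact hf p hp n hne

lemma H_C (a : ZMod 16) : H 0 (C a) := by
  intro n hn
  rw [coeff_C] at hn
  have : n = 0 := by by_contra h; simp [h] at hn
  simp [this]

lemma H_X (k : ℕ) : H k (X ^ k) := by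
  intro n hn
  rw [coeff_X_pow] at hn
  have : n = k := by by_contra h; simp [h] at hn
  simp [this]

lemma H.pow0 {f : S} (hf : H 0 f) (k : ℕ) : H 0 (f ^ k) := by
  induction k with
  | zero => simpa using H_C 1
  | succ k ih => rw [pow_succ]; simpa using ih.mul hf

lemma H_intCast (a : ℤ) : H 0 (a : S) := by
  have := H_C (a : ZMod 16)
  simpa using this

lemma H.neg {c : ZMod 4} {f : S} (hf : H c f) : H c (-f) := by
  intro n hn
  exact hf n (by simpa using hn)

lemma H.coeff_eq {c : ZMod 4} {f : S} (hf : H c f) {n : ℕ} (h : (n : ZMod 4) ≠ c) :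
    coeff n f = 0 := by
  by_contra h'
  exact h (hf n h')

lemma sixteen : (16 : S) = 0 := by
  have : (C (16 : ZMod 16) : S) = 0 := by
    rw [show (16 : ZMod 16) = 0 by decide]; simp
  rw [← this]; exact (map_ofNat (C (R := ZMod 16)) 16).symm

/-- char 2 square -/
lemma eight_sq {ι : Type*} (s : Finset ι) (f : ι → S) :
    8 * (∑ i ∈ s, f i) ^ 2 = 8 * ∑ i ∈ s, f i ^ 2 := by
  classical
  induction s using Finset.induction_on with
  | empty => simp
  | insert a s ha ih =>
    rw [sum_insert ha, sum_insert ha]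
    linear_combination ih + (f a * ∑ i ∈ s, f i) * sixteen

lemma no_rep (N : ℕ) (h : ∃ b M, N = 7 ^ (2 * b + 1) * M ∧ ¬ 7 ∣ M) (x y : ℕ) :
    x ^ 2 + 2 * y ^ 2 ≠ N := by
  obtain ⟨b, M, rfl, hM⟩ := h
  induction b generalizing x y with
  | zero =>
    intro h
    have h7 : (x ^ 2 + 2 * y ^ 2) % 7 = 0 := by rw [h]; simp
    have hx : 7 ∣ x ∧ 7 ∣ y := by
      have hx := Nat.mod_lt x (show 7 > 0 by norm_num)
      have hy := Nat.mod_lt y (show 7 > 0 by norm_num)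
      rw [Nat.add_mod, Nat.mul_mod, Nat.pow_mod, Nat.pow_mod y] at h7
      rw [Nat.dvd_iff_mod_eq_zero, Nat.dvd_iff_mod_eq_zero]
      generalize x % 7 = a at *
      generalize y % 7 = c at *
      interval_cases a <;> interval_cases c <;> simp_all
    obtain ⟨⟨x, rfl⟩, ⟨y, rfl⟩⟩ := hx
    apply hM
    refine ⟨x ^ 2 + 2 * y ^ 2, ?_⟩
    simp only [mul_zero, zero_add, pow_one] at h
    nlinarith
  | succ b ih =>
    intro h
    have h7 : (x ^ 2 + 2 * y ^ 2) % 7 = 0 := by rw [h, pow_succ, mul_right_comm]; simp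
    have hx : 7 ∣ x ∧ 7 ∣ y := by
      have hx := Nat.mod_lt x (show 7 > 0 by norm_num)
      have hy := Nat.mod_lt y (show 7 > 0 by norm_num)
      rw [Nat.add_mod, Nat.mul_mod, Nat.pow_mod, Nat.pow_mod y] at h7
      rw [Nat.dvd_iff_mod_eq_zero, Nat.dvd_iff_mod_eq_zero]
      generalize x % 7 = a at *
      generalize y % 7 = c at *
      interval_cases a <;> interval_cases c <;> simp_all
    obtain ⟨⟨x, rfl⟩, ⟨y, rfl⟩⟩ := hx
    apply ih x y
    have e : 7 ^ (2 * (b + 1) + 1) * M = 49 * (7 ^ (2 * b + 1) * M) := by ring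
    rw [e] at h
    nlinarith

lemma theta_split (m : ℕ) : ∃ a : S, H 0 a ∧
    (1 + ∑ k ∈ range (8 * m), 2 * (-1) ^ (k + 1) * X ^ ((0 + 1) * (k + 1) ^ 2) : S) =
    1 + 2 * a - 2 * ∑ k ∈ range (4 * m), X ^ ((2 * k + 1) ^ 2) := by
  refine ⟨∑ k ∈ range (4 * m), X ^ ((2 * k + 2) ^ 2), H.sum fun k _ => ?_, ?_⟩
  · have := H_X ((2 * k + 2) ^ 2)
    have e : (((2 * k + 2) ^ 2 : ℕ) : ZMod 4) = 0 := by
      rw [ZMod.natCast_eq_zero_iff]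
      exact ⟨(k + 1) ^ 2, by ring⟩
    rwa [e] at this
  · rw [show 8 * m = 2 * (4 * m) by ring]
    generalize 4 * m = n
    induction n with
    | zero => simp
    | succ n ih =>
      rw [show 2 * (n + 1) = 2 * n + 1 + 1 by ring]
      simp only [sum_range_succ]
      rw [← add_assoc, ← add_assoc, ih]
      have e1 : (-1 : S) ^ (2 * n + 1) = -1 := by rw [pow_succ, pow_mul]; simp
      have e2 : (-1 : S) ^ (2 * n + 1 + 1) = 1 := by rw [pow_succ, e1]; simp
      rw [e1, e2]
      ring

lemma theta_H (d n : ℕ) (hd : 4 ∣ d + 1) : ∃ a : S, H 0 a ∧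
    (1 + ∑ k ∈ range n, 2 * (-1) ^ (k + 1) * X ^ ((d + 1) * (k + 1) ^ 2) : S) = 1 + 2 * a := by
  refine ⟨∑ k ∈ range n, (-1) ^ (k + 1) * X ^ ((d + 1) * (k + 1) ^ 2), H.sum fun k _ => ?_, ?_⟩
  · have := H_X ((d + 1) * (k + 1) ^ 2)
    have e : (((d + 1) * (k + 1) ^ 2 : ℕ) : ZMod 4) = 0 := by
      rw [ZMod.natCast_eq_zero_iff]
      exact Dvd.dvd.mul_right hd _
    rw [e] at this
    have h1 : H 0 (-1 : S) := by simpa using H_intCast (-1)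
    simpa using (h1.pow0 (k + 1)).mul this
  · rw [mul_sum]
    congr 1
    exact sum_congr rfl fun k _ => by ring

lemma main (N : ℕ) (h4 : N % 4 = 3) (h : ∃ b M, N = 7 ^ (2 * b + 1) * M ∧ ¬ 7 ∣ M) :
    16 ∣ regularOverpartitions 4 8 N := by
  rw [← ZMod.natCast_eq_zero_iff, ← coeff_P]
  obtain ⟨m, hm, hc⟩ := coeff_P_fin N
  rw [hc]
  have hfin := finite_id m
  generalize (∏ i ∈ range (8 * m), g i) = G at *
  obtain ⟨E1, h1⟩ := gauss 0 (8 * m)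
  obtain ⟨E8, h8⟩ := gauss 7 m
  obtain ⟨E4, h4'⟩ := gauss 3 (2 * m)
  obtain ⟨a, ha, ea⟩ := theta_split m
  obtain ⟨c, hcH, ec⟩ := theta_H 7 m (by norm_num)
  obtain ⟨e, he, ee⟩ := theta_H 3 (2 * m) (by norm_num)
  rw [ea] at h1
  rw [ec] at h8
  rw [ee] at h4'
  simp only [zero_add, one_mul, Nat.reduceAdd] at h1 h8 h4'
  rw [h1, h8, h4'] at hfin
  have hb : H 1 (∑ k ∈ range (4 * m), X ^ ((2 * k + 1) ^ 2) : S) := by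
    refine H.sum fun k _ => ?_
    have := H_X ((2 * k + 1) ^ 2)
    have e : (((2 * k + 1) ^ 2 : ℕ) : ZMod 4) = 1 := by
      have : (2 * k + 1) ^ 2 = 4 * (k ^ 2 + k) + 1 := by ring
      rw [this]; push_cast
      rw [show (4 : ZMod 4) = 0 by decide]; simp
    rwa [e] at this
  have hb3 : coeff N (8 * (∑ k ∈ range (4 * m), X ^ ((2 * k + 1) ^ 2) : S) ^ 3) = 0 := by
    rw [pow_succ, ← mul_assoc, eight_sq, mul_assoc, sum_mul_sum]
    have e8 : (8 : S) = C (8 : ZMod 16) := (map_ofNat (C (R := ZMod 16)) 8).symm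
    rw [e8, coeff_C_mul, map_sum]
    rw [sum_eq_zero, mul_zero]
    intro i _
    rw [map_sum]
    refine sum_eq_zero fun j _ => ?_
    rw [← pow_mul, ← pow_add, coeff_X_pow, if_neg]
    intro hh
    exact no_rep N h (2 * j + 1) (2 * i + 1) (by rw [hh]; ring)
  generalize (∑ k ∈ range (4 * m), X ^ ((2 * k + 1) ^ 2) : S) = b at *
  -- inverses
  obtain ⟨Z1, hZ1⟩ : ∃ Z : S, X ^ (8 * m + 1) = X ^ (N + 1) * Z :=
    pow_dvd_pow _ (by omega)
  obtain ⟨Z8, hZ8⟩ : ∃ Z : S, X ^ (m + 1) = X ^ (N + 1) * Z :=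
    pow_dvd_pow _ (by omega)
  obtain ⟨Z4, hZ4⟩ : ∃ Z : S, X ^ (2 * m + 1) = X ^ (N + 1) * Z :=
    pow_dvd_pow _ (by omega)
  rw [hZ1, hZ8, hZ4] at hfin
  have s16 := sixteen
  have h1H : H 0 (1 : S) := by simpa using H_intCast 1
  have hnum : ∀ z : ℤ, H 0 (z : S) := H_intCast
  -- I x = inverse of 1 + 2 x
  obtain ⟨I, hI⟩ : ∃ I : S → S, I = fun x => 1 + 2 * (-x + 2 * x ^ 2 + (-4) * x ^ 3) := ⟨_, rfl⟩
  have hIinv : ∀ x, (1 + 2 * x) * I x = 1 := by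
    intro x; rw [hI]; linear_combination (-x ^ 4) * s16
  have hIH : ∀ x, H 0 x → H 0 (-x + 2 * x ^ 2 + (-4) * x ^ 3) := by
    intro x hx
    refine (hx.neg.add ?_).add ?_
    · simpa using (hnum 2).mul (hx.pow0 2)
    · simpa using (hnum (-4)).mul (hx.pow0 3)
  have one2 : ∀ x, H 0 x → H 0 (1 + 2 * x) := by
    intro x hx
    exact h1H.add (by simpa using (hnum 2).mul hx)
  have hIH' : ∀ x, H 0 x → H 0 (I x) := by
    intro x hx
    rw [hI]; exact one2 _ (hIH x hx)
  have mul0 : ∀ x y : S, H 0 x → H 0 y → H 0 (x * y) := by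
    intro x y hx hy; simpa using hx.mul hy
  obtain ⟨K, hK⟩ : ∃ K : S, K = (1 + 2 * e) * I c * I a ^ 4 := ⟨_, rfl⟩
  have hKH : H 0 K := by
    rw [hK]
    exact mul0 _ _ (mul0 _ _ (one2 _ he) (hIH' _ hcH)) ((hIH' _ ha).pow0 4)
  have hK2 : ∃ L, K = 1 + 2 * L := by
    have hm2 : ∀ x y : S, (∃ L, x = 1 + 2 * L) → (∃ L, y = 1 + 2 * L) →
        ∃ L, x * y = 1 + 2 * L := by
      rintro _ _ ⟨x, rfl⟩ ⟨y, rfl⟩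
      exact ⟨x + y + 2 * x * y, by ring⟩
    have hIx : ∀ x, ∃ L, I x = 1 + 2 * L := fun x => ⟨_, by rw [hI]⟩
    rw [hK]
    refine hm2 _ _ (hm2 _ _ ⟨_, rfl⟩ (hIx _)) ?_
    rw [show I a ^ 4 = I a * I a * (I a * I a) by ring]
    exact hm2 _ _ (hm2 _ _ (hIx _) (hIx _)) (hm2 _ _ (hIx _) (hIx _))
  obtain ⟨L, hL⟩ := hK2
  obtain ⟨A, hA⟩ : ∃ A : S, A = 1 + 2 * a := ⟨_, rfl⟩
  have hAH : H 0 A := by rw [hA]; exact one2 _ ha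
  have hcube : K * (2 * b) ^ 3 = 8 * b ^ 3 := by
    rw [hL]; linear_combination (L * b ^ 3) * s16
  have hAI : A ^ 4 * I a ^ 4 = 1 := by
    rw [← mul_pow, hA, hIinv, one_pow]
  have hcI := hIinv c
  have hdvd : ∃ W : S, G = K * A ^ 3 + K * A ^ 2 * (2 * b) + K * A * (2 * b) ^ 2
      + 8 * b ^ 3 + X ^ (N + 1) * W := by
    rw [← hcube]
    rw [← hA] at hfin
    -- G * (A-2b) * (1+2c) = 1 + 2e + X^(N+1) * W'
    obtain ⟨W', hW'⟩ : ∃ W' : S, G * (A - 2 * b) * (1 + 2 * c) = 1 + 2 * e + X ^ (N + 1) * W' := by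
      refine ⟨Z4 * E4 - G * (Z1 * E1) * (1 + 2 * c) - G * (A - 2 * b) * (Z8 * E8)
        - G * (X ^ (N + 1) * Z1 * E1) * (Z8 * E8), ?_⟩
      linear_combination hfin
    obtain ⟨T, hT⟩ : ∃ T : S, T = A ^ 3 + A ^ 2 * (2 * b) + A * (2 * b) ^ 2 + (2 * b) ^ 3 :=
      ⟨_, rfl⟩
    have hT2 : (A - 2 * b) * T = A ^ 4 := by
      rw [hT]; linear_combination (-b ^ 4) * s16
    refine ⟨W' * I c * I a ^ 4 * T, ?_⟩
    have hG : G = (G * (A - 2 * b) * (1 + 2 * c)) * I c * I a ^ 4 * T := by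
      calc G = G * (A ^ 4 * I a ^ 4) * ((1 + 2 * c) * I c) := by rw [hAI, hcI]; ring
        _ = _ := by rw [← hT2]; ring
    rw [hW'] at hG
    rw [hG, hK, hT]
    ring
  obtain ⟨W, hW⟩ := hdvd
  have hN : (N : ZMod 4) = 3 := by
    rw [← ZMod.natCast_mod, h4]; rfl
  have c2 : H 0 (2 : S) := by simpa using hnum 2
  have hb2 : H 1 (2 * b) := by simpa using c2.mul hb
  have t1 : H 0 (K * A ^ 3) := mul0 _ _ hKH (hAH.pow0 3)
  have t2 : H 1 (K * A ^ 2 * (2 * b)) := by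
    simpa using (mul0 _ _ hKH (hAH.pow0 2)).mul hb2
  have t3 : H (1 + 1) (K * A * (2 * b) ^ 2) := by
    rw [sq]
    simpa using (mul0 _ _ hKH hAH).mul (hb2.mul hb2)
  rw [hW]
  simp only [map_add]
  rw [t1.coeff_eq (by rw [hN]; decide), t2.coeff_eq (by rw [hN]; decide),
    t3.coeff_eq (by rw [hN]; decide), hb3, coeff_X_pow_mul', if_neg (by omega)]
  simp

end OP

theorem stmt_15 (n α β : ℕ) (k : ℕ) (hk : k ∈ ({0, 1, 3, 4, 5, 6} : Finset ℕ)) :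
    16 ∣ regularOverpartitions 4 8
        (8 * 5 ^ (2 * α) * 7 ^ (2 * β + 1) * (7 * n + k)
          + 5 * 5 ^ (2 * α) * 7 ^ (2 * β + 1)) := by
  apply OP.main
  · have h5 : 5 ^ (2 * α) % 4 = 1 := by rw [Nat.pow_mod]; simp
    have h7 : 7 ^ (2 * β + 1) % 4 = 3 := by
      rw [pow_succ, pow_mul, Nat.mul_mod, Nat.pow_mod]; simp
    rw [show 8 * 5 ^ (2 * α) * 7 ^ (2 * β + 1) * (7 * n + k) + 5 * 5 ^ (2 * α) * 7 ^ (2 * β + 1)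
      = 5 ^ (2 * α) * 7 ^ (2 * β + 1) * (4 * (2 * (7 * n + k) + 1) + 1) by ring]
    rw [Nat.mul_mod, Nat.mul_mod (5 ^ (2 * α)), h5, h7]
    omega
  · refine ⟨β, 5 ^ (2 * α) * (8 * (7 * n + k) + 5), by ring, ?_⟩
    have h7 : Nat.Prime 7 := by norm_num
    rw [h7.dvd_mul]
    rintro (h | h)
    · have := h7.dvd_of_dvd_pow h
      omega
    · simp only [Finset.mem_insert, Finset.mem_singleton] at hk
      omega
end

section
/- Let p ≥ 5 be a prime such that −2 is a quadratic nonresidue modulo p. Then for all integers n ≥ 0, α ≥ 0 and every j with 1 ≤ j ≤ p − 1, the number of (4,8)-regular overpartitions satisfies p̄_{4,8}( 2 · p^{2α+1} · (8(pn + j) + p) ) ≡ 0 (mod 8). -/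
open Finset in
lemma aux_fiber (N : ℕ) : regularOverpartitions 4 8 N =
    ∑ ν ∈ (Finset.univ : Finset (Nat.Partition N)).filter (fun nu => ∀ i ∈ nu.parts, i % 8 ≠ 4),
      2 ^ ν.parts.toFinset.card := by
  unfold regularOverpartitions
  simp_rw [← Finset.card_product, ← Finset.card_powerset]
  rw [← Finset.card_sigma, ← Finset.card_sigma]
  refine Finset.card_bij (fun x hx => ⟨⟨x.2.1.parts + x.2.2.parts, ?_, ?_⟩, x.2.1.parts.toFinset⟩)
    ?_ ?_ ?_
  · intro i hi
    rcases Multiset.mem_add.1 hi with h | h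
    · exact x.2.1.parts_pos h
    · exact x.2.2.parts_pos h
  · have := (Finset.mem_sigma.1 hx).1
    rw [Finset.mem_range] at this
    rw [Multiset.sum_add, x.2.1.parts_sum, x.2.2.parts_sum]
    omega
  · rintro ⟨m, l, u⟩ hx
    simp only [Finset.mem_sigma, Finset.mem_product, Finset.mem_filter, Finset.mem_univ, true_and,
      Finset.mem_powerset] at hx ⊢
    refine ⟨?_, ?_⟩
    · intro i hi
      rcases Multiset.mem_add.1 hi with h | h
      · exact hx.2.1.2 i h
      · exact hx.2.2 i h
    · intro i hi
      simp only [Multiset.mem_toFinset, Multiset.mem_add] at hi ⊢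
      exact Or.inl hi
  · rintro ⟨m, l, u⟩ hx ⟨m', l', u'⟩ hx' h
    simp only [Finset.mem_sigma, Finset.mem_product, Finset.mem_filter, Finset.mem_univ, true_and,
      Nat.Partition.distincts] at hx hx'
    simp only [Sigma.mk.injEq, Nat.Partition.mk.injEq, heq_eq_eq] at h
    obtain ⟨h1, h2⟩ := h
    have h3 : l.parts = l'.parts := by
      rw [← Multiset.dedup_eq_self.2 hx.2.1.1, ← Multiset.dedup_eq_self.2 hx'.2.1.1,
        ← Multiset.toFinset_val, ← Multiset.toFinset_val, h2]
    have h4 : u.parts = u'.parts := by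
      rw [h3] at h1; exact add_left_cancel h1
    have hm : m = m' := by rw [← l.parts_sum, ← l'.parts_sum, h3]
    subst hm
    have e1 := Nat.Partition.ext h3
    have e2 := Nat.Partition.ext h4
    subst e1; subst e2; rfl
  · rintro ⟨ν, S⟩ hx
    simp only [Finset.mem_sigma, Finset.mem_filter, Finset.mem_univ, true_and,
      Finset.mem_powerset] at hx
    obtain ⟨h1, h2⟩ := hx
    have hle : S.val ≤ ν.parts := by
      rw [Multiset.le_iff_subset S.nodup]
      intro i hi
      exact Multiset.mem_toFinset.1 (h2 hi)
    obtain ⟨u, hu⟩ := Multiset.le_iff_exists_add.1 hle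
    have hsum : S.val.sum + u.sum = N := by rw [← Multiset.sum_add, ← hu, ν.parts_sum]
    refine ⟨⟨S.val.sum, ⟨S.val, ?_, rfl⟩, ⟨u, ?_, by omega⟩⟩, ?_, ?_⟩
    · intro i hi
      exact ν.parts_pos (Multiset.mem_of_le hle hi)
    · intro i hi
      exact ν.parts_pos (by rw [hu]; exact Multiset.mem_add.2 (Or.inr hi))
    · simp only [Finset.mem_sigma, Finset.mem_product, Finset.mem_filter, Finset.mem_univ, true_and,
        Nat.Partition.distincts, Finset.mem_range]
      refine ⟨by omega, ⟨S.nodup, ?_⟩, ?_⟩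
      · intro i hi
        exact h1 i (Multiset.mem_of_le hle hi)
      · intro i hi
        exact h1 i (by rw [hu]; exact Multiset.mem_add.2 (Or.inr hi))
    · have : ν = ⟨S.val + u, fun {i} hi => ν.parts_pos (by rw [hu]; exact hi), by
        rw [← hu, ν.parts_sum]⟩ := Nat.Partition.ext hu
      simp [← this]

lemma aux_one (N : ℕ) (hN : N % 4 = 2) :
    (((Finset.univ : Finset (Nat.Partition N)).filter
      (fun nu => ∀ i ∈ nu.parts, i % 8 ≠ 4)).filter
      (fun nu => nu.parts.toFinset.card = 1)).card = N.divisors.card := by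
  symm
  have key : ∀ d ∈ N.divisors, 0 < d ∧ 0 < N / d ∧ N / d * d = N := by
    intro d hd
    have h := Nat.dvd_of_mem_divisors hd
    exact ⟨Nat.pos_of_mem_divisors hd, Nat.div_pos (Nat.le_of_dvd (by omega) h)
      (Nat.pos_of_mem_divisors hd), Nat.div_mul_cancel h⟩
  refine Finset.card_bij (fun d hd => ⟨Multiset.replicate (N / d) d, ?_, ?_⟩) ?_ ?_ ?_
  · intro i hi
    rw [Multiset.eq_of_mem_replicate hi]; exact (key d hd).1
  · rw [Multiset.sum_replicate, smul_eq_mul]; exact (key d hd).2.2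
  · intro d hd
    obtain ⟨k1, k2, k3⟩ := key d hd
    simp only [Finset.mem_filter, Finset.mem_univ, true_and]
    refine ⟨?_, ?_⟩
    · intro i hi h4
      rw [Multiset.eq_of_mem_replicate hi] at h4
      have : 4 ∣ N := dvd_trans (by omega) (Nat.dvd_of_mem_divisors hd)
      omega
    · rw [Multiset.toFinset_replicate, if_neg k2.ne']; simp
  · intro d hd e he h
    simp only [Nat.Partition.mk.injEq] at h
    have : d ∈ Multiset.replicate (N / d) d := Multiset.mem_replicate.2 ⟨(key d hd).2.1.ne', rfl⟩
    rw [h] at this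
    exact Multiset.eq_of_mem_replicate this
  · intro ν hν
    simp only [Finset.mem_filter, Finset.mem_univ, true_and] at hν
    obtain ⟨d, hd⟩ := Finset.card_eq_one.1 hν.2
    have hmem : d ∈ ν.parts := by rw [← Multiset.mem_toFinset, hd]; simp
    have hr : ν.parts = Multiset.replicate (Multiset.card ν.parts) d := by
      rw [Multiset.eq_replicate]
      refine ⟨rfl, fun b hb => ?_⟩
      rw [← Multiset.mem_toFinset, hd] at hb; simpa using hb
    have hs : Multiset.card ν.parts * d = N := by
      have := ν.parts_sum
      rw [hr, Multiset.sum_replicate, smul_eq_mul] at this; exact this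
    have hpos := ν.parts_pos hmem
    refine ⟨d, ?_, ?_⟩
    · rw [Nat.mem_divisors]; exact ⟨⟨_, by rw [mul_comm]; exact hs.symm⟩, by omega⟩
    · apply Nat.Partition.ext
      simp only
      conv_rhs => rw [hr]
      congr 1
      exact Nat.div_eq_of_eq_mul_left hpos hs.symm

/-- quadruples (d1, m1, d2, m2) -/
def quads (N : ℕ) : Finset (ℕ × ℕ × ℕ × ℕ) :=
  ((Finset.range (N+1)) ×ˢ (Finset.range (N+1)) ×ˢ (Finset.range (N+1)) ×ˢ
    (Finset.range (N+1))).filter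
    (fun x => 0 < x.1 ∧ 0 < x.2.1 ∧ 0 < x.2.2.1 ∧ 0 < x.2.2.2 ∧
      x.1 * x.2.1 + x.2.2.1 * x.2.2.2 = N)

lemma mem_quads (N a b c d : ℕ) : (a, b, c, d) ∈ quads N ↔
    0 < a ∧ 0 < b ∧ 0 < c ∧ 0 < d ∧ a * b + c * d = N := by
  simp only [quads, Finset.mem_filter, Finset.mem_product, Finset.mem_range, and_iff_right_iff_imp]
  rintro ⟨ha, hb, hc, hd, h⟩
  refine ⟨?_, ?_, ?_, ?_⟩ <;> nlinarith

lemma aux_two (N : ℕ) :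
    (((Finset.univ : Finset (Nat.Partition N)).filter
      (fun nu => ∀ i ∈ nu.parts, i % 8 ≠ 4)).filter
      (fun nu => nu.parts.toFinset.card = 2)).card =
    ((quads N).filter (fun x => x.2.2.1 < x.1 ∧ ¬ (x.1 % 8 = 4 ∨ x.2.2.1 % 8 = 4))).card := by
  symm
  refine Finset.card_bij (fun x hx => ⟨Multiset.replicate x.2.1 x.1 +
    Multiset.replicate x.2.2.2 x.2.2.1, ?_, ?_⟩) ?_ ?_ ?_
  · obtain ⟨a, b, c, d⟩ := x
    rw [Finset.mem_filter, mem_quads] at hx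
    intro i hi
    rcases Multiset.mem_add.1 hi with h | h <;> rw [Multiset.eq_of_mem_replicate h]
    · exact hx.1.1
    · exact hx.1.2.2.1
  · obtain ⟨a, b, c, d⟩ := x
    rw [Finset.mem_filter, mem_quads] at hx
    simp only [Multiset.sum_add, Multiset.sum_replicate, smul_eq_mul]
    linarith [hx.1.2.2.2.2, mul_comm a b, mul_comm c d]
  · rintro ⟨a, b, c, d⟩ hx
    rw [Finset.mem_filter, mem_quads] at hx
    simp only at hx
    obtain ⟨⟨ha, hb, hc, hd, h⟩, hlt, h8⟩ := hx
    simp only [Finset.mem_filter, Finset.mem_univ, true_and]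
    refine ⟨?_, ?_⟩
    · intro i hi h4
      rcases Multiset.mem_add.1 hi with h | h <;> rw [Multiset.eq_of_mem_replicate h] at h4 <;> omega
    · rw [Multiset.toFinset_add, Multiset.toFinset_replicate, Multiset.toFinset_replicate,
        if_neg hb.ne', if_neg hd.ne']
      exact Finset.card_pair hlt.ne'
  · rintro ⟨a, b, c, d⟩ hx ⟨a', b', c', d'⟩ hx' h
    rw [Finset.mem_filter, mem_quads] at hx hx'
    simp only at hx hx'
    simp only [Nat.Partition.mk.injEq] at h
    obtain ⟨⟨ha, hb, hc, hd, -⟩, hlt, -⟩ := hx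
    obtain ⟨⟨ha', hb', hc', hd', -⟩, hlt', -⟩ := hx'
    have k := fun i => congrArg (Multiset.count i) h
    simp only [Multiset.count_add, Multiset.count_replicate] at k
    have k1 := k a
    have k2 := k c
    have k3 := k a'
    have k4 := k c'
    simp only [Prod.mk.injEq]
    grind
  · intro ν hν
    simp only [Finset.mem_filter, Finset.mem_univ, true_and] at hν
    obtain ⟨h8, h2⟩ := hν
    obtain ⟨a, c, hlt, hac⟩ : ∃ a c, c < a ∧ ν.parts.toFinset = {a, c} := by
      obtain ⟨a, c, hne, hac⟩ := Finset.card_eq_two.1 h2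
      rcases lt_or_gt_of_ne hne with h | h
      · exact ⟨c, a, h, by rw [hac, Finset.pair_comm]⟩
      · exact ⟨a, c, h, hac⟩
    have hma : a ∈ ν.parts := by rw [← Multiset.mem_toFinset, hac]; simp
    have hmc : c ∈ ν.parts := by rw [← Multiset.mem_toFinset, hac]; simp
    have hr : ν.parts = Multiset.replicate (ν.parts.count a) a +
        Multiset.replicate (ν.parts.count c) c := by
      ext i
      rw [Multiset.count_add, Multiset.count_replicate, Multiset.count_replicate]
      by_cases hi : i ∈ ν.parts
      · rw [← Multiset.mem_toFinset, hac] at hi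
        simp only [Finset.mem_insert, Finset.mem_singleton] at hi
        rcases hi with rfl | rfl
        · simp [hlt.ne]
        · simp [hlt.ne']
      · have hia : a ≠ i := by rintro rfl; exact hi hma
        have hic : c ≠ i := by rintro rfl; exact hi hmc
        simp [hia, hic, hi]
    have hs : a * ν.parts.count a + c * ν.parts.count c = N := by
      have := congrArg Multiset.sum hr
      rw [ν.parts_sum, Multiset.sum_add, Multiset.sum_replicate, Multiset.sum_replicate,
        smul_eq_mul, smul_eq_mul] at this
      linarith [mul_comm a (ν.parts.count a), mul_comm c (ν.parts.count c)]
    refine ⟨(a, ν.parts.count a, c, ν.parts.count c), ?_, ?_⟩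
    · rw [Finset.mem_filter, mem_quads]
      exact ⟨⟨ν.parts_pos hma, Multiset.count_pos.2 hma, ν.parts_pos hmc,
        Multiset.count_pos.2 hmc, hs⟩, hlt, by
          have := h8 a hma
          have := h8 c hmc
          simp only; omega⟩
    · exact Nat.Partition.ext hr.symm

lemma even_of_invol {s : Finset (ℕ × ℕ × ℕ × ℕ)} (g : ℕ × ℕ × ℕ × ℕ → ℕ × ℕ × ℕ × ℕ)
    (h1 : ∀ x ∈ s, g x ∈ s) (h2 : ∀ x ∈ s, g x ≠ x) (h3 : ∀ x ∈ s, g (g x) = x) :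
    Even s.card := by
  have : ∑ x ∈ s, (1 : ZMod 2) = 0 :=
    Finset.sum_involution (fun x _ => g x) (fun _ _ => by decide) (fun x hx _ => h2 x hx)
      (fun x hx => h1 x hx) (fun x hx => h3 x hx)
  rw [Finset.sum_const, nsmul_eq_mul, mul_one] at this
  exact (ZMod.natCast_eq_zero_iff_even).1 this

lemma even_T (N : ℕ) (hN : N % 4 = 2) :
    Even ((quads N).filter (fun x => x.2.2.1 < x.1)).card := by
  apply even_of_invol (fun x => (x.2.1 + x.2.2.2, x.2.2.1, x.2.1, x.1 - x.2.2.1))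
  · rintro ⟨a, b, c, d⟩ hx
    rw [Finset.mem_filter, mem_quads] at hx
    rw [Finset.mem_filter, mem_quads]
    simp only at hx ⊢
    obtain ⟨⟨ha, hb, hc, hd, h⟩, hlt⟩ := hx
    obtain ⟨k, rfl⟩ := Nat.exists_eq_add_of_lt hlt
    refine ⟨⟨by omega, hc, hb, by omega, ?_⟩, by omega⟩
    rw [← h, show c + k + 1 - c = k + 1 by omega]; ring
  · rintro ⟨a, b, c, d⟩ hx he
    rw [Finset.mem_filter, mem_quads] at hx
    simp only [Prod.mk.injEq] at hx he
    obtain ⟨⟨ha, hb, hc, hd, h⟩, hlt⟩ := hx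
    obtain ⟨e1, e2, e3, e4⟩ := he
    subst e2
    subst e1
    have h' : c * (c + 2 * d) = N := by rw [← h]; ring
    have h'' : (c * (c + 2 * d)) % 4 = N % 4 := by rw [h']
    rw [hN, Nat.mul_mod, show (c + 2 * d) % 4 = (c % 4 + 2 * (d % 4)) % 4 by omega] at h''
    have : c % 4 < 4 := Nat.mod_lt _ (by omega)
    have : d % 4 < 4 := Nat.mod_lt _ (by omega)
    generalize c % 4 = c' at *
    generalize d % 4 = d' at *
    interval_cases c' <;> interval_cases d' <;> omega
  · rintro ⟨a, b, c, d⟩ hx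
    rw [Finset.mem_filter, mem_quads] at hx
    simp only [Prod.mk.injEq, true_and, and_true] at hx ⊢
    obtain ⟨⟨ha, hb, hc, hd, h⟩, hlt⟩ := hx
    omega

lemma even_W (N : ℕ) (hN : N % 4 = 2) :
    Even ((quads N).filter (fun x => x.1 % 8 = 4)).card := by
  have key : ∀ a b c d : ℕ, a % 8 = 4 → a * b + c * d = N →
      (c % 2 = 1 ∧ d % 4 = 2) ∨ (c % 4 = 2 ∧ d % 2 = 1) := by
    intro a b c d ha h
    have h1 : (c * d) % 4 = 2 := by
      obtain ⟨k, hk⟩ : 4 ∣ a := by omega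
      rw [hk, mul_assoc] at h
      omega
    rw [Nat.mul_mod] at h1
    have : c % 4 < 4 := Nat.mod_lt _ (by omega)
    have : d % 4 < 4 := Nat.mod_lt _ (by omega)
    have e1 : c % 2 = (c % 4) % 2 := by omega
    have e2 : d % 2 = (d % 4) % 2 := by omega
    rw [e1, e2]
    generalize c % 4 = c' at *
    generalize d % 4 = d' at *
    interval_cases c' <;> interval_cases d' <;> omega
  apply even_of_invol (fun x => if x.2.2.1 % 2 = 1 then (x.1, x.2.1, 2 * x.2.2.1, x.2.2.2 / 2)
    else (x.1, x.2.1, x.2.2.1 / 2, 2 * x.2.2.2))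
  · rintro ⟨a, b, c, d⟩ hx
    rw [Finset.mem_filter, mem_quads] at hx
    simp only at hx ⊢
    obtain ⟨⟨ha, hb, hc, hd, h⟩, hlt⟩ := hx
    have k := key a b c d hlt h
    split_ifs with h2
    · rw [Finset.mem_filter, mem_quads]
      obtain ⟨e, rfl⟩ : 2 ∣ d := by omega
      refine ⟨⟨ha, hb, by omega, by omega, ?_⟩, hlt⟩
      rw [← h, Nat.mul_div_cancel_left _ (by omega)]; ring
    · rw [Finset.mem_filter, mem_quads]
      obtain ⟨e, rfl⟩ : 2 ∣ c := by omega
      refine ⟨⟨ha, hb, by omega, by omega, ?_⟩, hlt⟩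
      rw [← h, Nat.mul_div_cancel_left _ (by omega)]; ring
  · rintro ⟨a, b, c, d⟩ hx he
    rw [Finset.mem_filter, mem_quads] at hx
    simp only at hx he
    split_ifs at he <;> simp only [Prod.mk.injEq] at he <;> omega
  · rintro ⟨a, b, c, d⟩ hx
    rw [Finset.mem_filter, mem_quads] at hx
    simp only at hx
    obtain ⟨⟨ha, hb, hc, hd, h⟩, hlt⟩ := hx
    have k := key a b c d hlt h
    by_cases h2 : c % 2 = 1
    · have : ¬ (2 * c % 2 = 1) := by omega
      simp only [h2, this, if_true, if_false, Prod.mk.injEq, true_and, and_true]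
      omega
    · have : c / 2 % 2 = 1 := by omega
      simp only [h2, this, if_true, if_false, Prod.mk.injEq, true_and, and_true]
      omega

lemma card_Y (N : ℕ) (hN : N % 4 = 2) :
    ((quads N).filter (fun x => x.2.2.1 < x.1 ∧ (x.1 % 8 = 4 ∨ x.2.2.1 % 8 = 4))).card =
    ((quads N).filter (fun x => x.1 % 8 = 4)).card := by
  have key : ∀ a b c d : ℕ, a % 8 = 4 → c % 8 = 4 → a * b + c * d = N → False := by
    intro a b c d ha hc h
    have h1 : 4 ∣ a * b := Dvd.dvd.mul_right (by omega) _
    have h2 : 4 ∣ c * d := Dvd.dvd.mul_right (by omega) _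
    omega
  refine Finset.card_bij (fun x _ => if x.1 % 8 = 4 then x else (x.2.2.1, x.2.2.2, x.1, x.2.1))
    ?_ ?_ ?_
  · rintro ⟨a, b, c, d⟩ hx
    rw [Finset.mem_filter, mem_quads] at hx
    simp only at hx ⊢
    split_ifs with h <;> rw [Finset.mem_filter, mem_quads] <;> simp only <;> omega
  · rintro ⟨a, b, c, d⟩ hx ⟨a', b', c', d'⟩ hx' h
    rw [Finset.mem_filter, mem_quads] at hx hx'
    simp only at hx hx' h
    split_ifs at h <;> simp only [Prod.mk.injEq] at h ⊢ <;> omega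
  · rintro ⟨a, b, c, d⟩ hx
    rw [Finset.mem_filter, mem_quads] at hx
    simp only at hx
    obtain ⟨⟨ha, hb, hc, hd, h⟩, h8⟩ := hx
    have hc8 : ¬ c % 8 = 4 := fun h' => key a b c d h8 h' h
    rcases lt_or_ge c a with hl | hl
    · refine ⟨(a, b, c, d), ?_, by simp [h8]⟩
      rw [Finset.mem_filter, mem_quads]
      simp only; omega
    · refine ⟨(c, d, a, b), ?_, by simp [hc8]⟩
      rw [Finset.mem_filter, mem_quads]
      have : a ≠ c := by rintro rfl; exact hc8 h8
      simp only; omega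

lemma even_X (N : ℕ) (hN : N % 4 = 2) :
    Even ((quads N).filter
      (fun x => x.2.2.1 < x.1 ∧ ¬ (x.1 % 8 = 4 ∨ x.2.2.1 % 8 = 4))).card := by
  have h := Finset.card_filter_add_card_filter_not (s := (quads N).filter (fun x => x.2.2.1 < x.1))
    (fun x => x.1 % 8 = 4 ∨ x.2.2.1 % 8 = 4)
  rw [Finset.filter_filter, Finset.filter_filter, card_Y N hN] at h
  have h1 := even_T N hN
  have h2 := even_W N hN
  rw [← h] at h1
  exact (Nat.even_add.1 h1).1 h2

lemma aux_main (N : ℕ) (hN : N % 4 = 2) (hd : 4 ∣ N.divisors.card) :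
    8 ∣ regularOverpartitions 4 8 N := by
  rw [aux_fiber]
  have h1 := aux_one N hN
  have h2 := aux_two N
  obtain ⟨t, ht⟩ := even_X N hN
  rw [ht] at h2
  generalize Finset.filter (fun nu : Nat.Partition N => ∀ i ∈ nu.parts, i % 8 ≠ 4) Finset.univ = F
    at *
  have hpt : ∀ ν ∈ F, 2 ^ ν.parts.toFinset.card =
      2 * (if ν.parts.toFinset.card = 1 then 1 else 0) +
      4 * (if ν.parts.toFinset.card = 2 then 1 else 0) +
      8 * (if 3 ≤ ν.parts.toFinset.card then 2 ^ (ν.parts.toFinset.card - 3) else 0) := by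
    intro ν _
    have hpos : 0 < ν.parts.toFinset.card := by
      rw [Finset.card_pos, Multiset.toFinset_nonempty]
      intro h0
      have := ν.parts_sum
      rw [h0] at this
      simp at this
      omega
    generalize ν.parts.toFinset.card = c at *
    rcases Nat.lt_or_ge c 3 with h | h
    · interval_cases c <;> simp
    · obtain ⟨k, rfl⟩ := Nat.exists_eq_add_of_le h
      rw [if_neg (by omega), if_neg (by omega), if_pos h]
      simp [pow_add]
  rw [Finset.sum_congr rfl hpt, Finset.sum_add_distrib, Finset.sum_add_distrib,
    ← Finset.mul_sum, ← Finset.mul_sum, ← Finset.mul_sum, ← Finset.card_filter,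
    ← Finset.card_filter, h1, h2]
  omega

theorem stmt_16 (p : ℕ) (hp : p.Prime) (hp5 : 5 ≤ p) (hns : ¬ IsSquare (-2 : ZMod p))
    (n α : ℕ) (j : ℕ) (hj1 : 1 ≤ j) (hjp : j ≤ p - 1) :
    8 ∣ regularOverpartitions 4 8 (2 * p ^ (2 * α + 1) * (8 * (p * n + j) + p)) := by
  have hodd : Odd p := hp.odd_of_ne_two (by omega)
  have hcodd : Odd (8 * (p * n + j) + p) := by
    rw [Nat.odd_add, ]
    exact ⟨fun _ => by exact absurd ‹Odd (8 * _)› (by rw [Nat.not_odd_iff_even, mul_comm]; exact (by decide : Even 8).mul_left _), fun h => absurd hodd (by rwa [Nat.not_odd_iff_even])⟩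
  have hModd : Odd (p ^ (2 * α + 1) * (8 * (p * n + j) + p)) := (hodd.pow).mul hcodd
  have hcop : Nat.Coprime p (8 * (p * n + j) + p) := by
    rw [hp.coprime_iff_not_dvd]
    intro h
    have h1 : p ∣ 8 * (p * n + j) := (Nat.dvd_add_left (dvd_refl p)).1 h
    rcases hp.dvd_mul.1 h1 with h2 | h2
    · have h3 : p ∣ 2 := hp.dvd_of_dvd_pow (show p ∣ 2 ^ 3 from h2)
      have := Nat.le_of_dvd (by omega) h3
      omega
    · have h3 : p ∣ j := (Nat.dvd_add_right (Dvd.intro n rfl)).1 h2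
      have := Nat.le_of_dvd (by omega) h3
      omega
  generalize 8 * (p * n + j) + p = c at *
  rw [mul_assoc]
  apply aux_main
  · obtain ⟨k, hk⟩ := hModd
    omega
  · rw [Nat.Coprime.card_divisors_mul ((Nat.coprime_two_left).2 hModd),
      Nat.Coprime.card_divisors_mul (hcop.pow_left _), Nat.divisors_prime_pow hp, Finset.card_map,
      Finset.card_range, Nat.Prime.divisors Nat.prime_two]
    rw [Finset.card_pair (by decide), ← mul_assoc]
    exact Dvd.dvd.mul_right ⟨α + 1, by ring⟩ _
end

section
/- Let p ≥ 5 be a prime. Then for all integers n ≥ 0, α ≥ 0 and every j with 1 ≤ j ≤ p − 1, the number of (6,12)-regular overpartitions satisfies p̄_{6,12}( p^{2α+1} · (24(pn + j) + p) ) ≡ 0 (mod 4). -/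
open PowerSeries Finset in
open scoped PowerSeries.WithPiTopology in
theorem aux_coeff_tsum {R : Type*} [CommSemiring R] [TopologicalSpace R] [T2Space R]
    (f : ℕ → ℕ → R) (i : ℕ) (n : ℕ) :
    coeff n (∑' j, f (i+1) (j + 1) • (X : R⟦X⟧) ^ ((i+1) * (j + 1)))
      = if (i+1) ∣ n ∧ n ≠ 0 then f (i+1) (n / (i+1)) else 0 := by
  rw [(Nat.Partition.summable_genFun_term f i).map_tsum _
    (WithPiTopology.continuous_coeff _ _)]
  simp only [map_smul, coeff_X_pow, smul_eq_mul, mul_ite, mul_one, mul_zero]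
  split_ifs with h
  · obtain ⟨⟨k, rfl⟩, hk⟩ := h
    have hk0 : k ≠ 0 := by rintro rfl; simp at hk
    obtain ⟨m, rfl⟩ := Nat.exists_eq_add_one_of_ne_zero hk0
    rw [tsum_eq_single m]
    · simp
    · intro b hb
      rw [if_neg]
      intro h
      have := Nat.eq_of_mul_eq_mul_left (Nat.succ_pos i) h
      omega
  · convert tsum_zero with j
    rw [if_neg]
    rintro rfl
    exact h ⟨Dvd.intro _ rfl, by positivity⟩

/-- The series of `q^i/(1-q^i)`. -/
noncomputable def auxS (i : ℕ) : PowerSeries (ZMod 4) :=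
  PowerSeries.mk fun n => if i ∣ n ∧ n ≠ 0 then 1 else 0

open PowerSeries in
theorem auxS_mul (i : ℕ) (hi : i ≠ 0) :
    (1 + X ^ i) * (1 + auxS i) = 1 + 2 * auxS i := by
  have h : X ^ i * (1 + auxS i) = auxS i := by
    ext n
    rw [coeff_X_pow_mul']
    simp only [auxS, map_add, coeff_one, coeff_mk]
    by_cases hin : i ≤ n
    · obtain ⟨m, rfl⟩ := Nat.exists_eq_add_of_le hin
      by_cases hm : m = 0 <;> simp [hm, hi]
    · have : ¬ (i ∣ n ∧ n ≠ 0) := fun h =>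
        hin (Nat.le_of_dvd (Nat.pos_of_ne_zero h.2) h.1)
      rw [if_neg hin, if_neg this]
  linear_combination h

open PowerSeries in
theorem aux_prod (s : Finset ℕ) (P : ℕ → Prop) [DecidablePred P] :
    ∏ i ∈ s, (if P (i+1) then 1 + 2 * auxS (i+1) else 1)
      = 1 + 2 * ∑ i ∈ s, if P (i+1) then auxS (i+1) else 0 := by
  have h4 : (4 : PowerSeries (ZMod 4)) = 0 := by
    have : (4 : ZMod 4) = 0 := rfl
    have h := congrArg (C (R := ZMod 4)) this
    rw [map_zero] at h
    exact (map_ofNat (C (R := ZMod 4)) 4).symm.trans h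
  classical
  induction s using Finset.induction_on with
  | empty => simp
  | insert a s ha ih =>
    rw [Finset.prod_insert ha, Finset.sum_insert ha, ih]
    split_ifs
    · linear_combination (auxS (a+1) * ∑ i ∈ s, if P (i+1) then auxS (i+1) else 0) * h4
    · ring

theorem aux_distinct (P : ℕ → Prop) [DecidablePred P] (m : ℕ) :
    (((Nat.Partition.distincts m).filter (fun lam => ∀ i ∈ lam.parts, P i)).card : ZMod 4)
    = (Nat.Partition.genFun (fun i c => if P i ∧ c = 1 then (1 : ZMod 4) else 0)).coeff m := by
  rw [Nat.Partition.coeff_genFun, Nat.Partition.distincts, Finset.filter_filter,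
    Finset.card_filter]
  push_cast
  refine Finset.sum_congr rfl fun q _ => ?_
  rw [Finsupp.prod, Finset.prod_ite_zero]
  simp only [Finset.prod_const_one]
  congr 1
  simp only [Multiset.toFinsupp_support, Multiset.mem_toFinset, Multiset.toFinsupp_apply,
    eq_iff_iff]
  constructor
  · rintro ⟨h1, h2⟩ i hi
    exact ⟨h2 i hi, Multiset.count_eq_one_of_mem h1 hi⟩
  · intro h
    refine ⟨Multiset.nodup_iff_count_le_one.2 fun a => ?_, fun i hi => (h i hi).1⟩
    by_cases ha : a ∈ q.parts
    · exact (h a ha).2.le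
    · simp [Multiset.count_eq_zero_of_notMem ha]

theorem aux_restr (P : ℕ → Prop) [DecidablePred P] (m : ℕ) :
    (((Finset.univ : Finset (Nat.Partition m)).filter
      (fun mu => ∀ i ∈ mu.parts, P i)).card : ZMod 4)
    = (Nat.Partition.genFun (fun i _ => if P i then (1 : ZMod 4) else 0)).coeff m := by
  rw [Nat.Partition.coeff_genFun, Finset.card_filter]
  push_cast
  refine Finset.sum_congr rfl fun q _ => ?_
  rw [Finsupp.prod, Finset.prod_ite_zero]
  simp

open PowerSeries Finset in
open scoped PowerSeries.WithPiTopology in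
theorem aux_main_s17 (j k N : ℕ) (hN : N ≠ 0) :
    (regularOverpartitions j k N : ZMod 4)
      = 2 * ((N.divisors.filter (fun d => d % k ≠ j)).card : ZMod 4) := by
  let _ : TopologicalSpace (ZMod 4) := ⊥
  have _ : DiscreteTopology (ZMod 4) := ⟨rfl⟩
  set P : ℕ → Prop := fun i => i % k ≠ j with hP
  set D := Nat.Partition.genFun (fun i c => if P i ∧ c = 1 then (1 : ZMod 4) else 0) with hD
  set M := Nat.Partition.genFun (fun i _ => if P i then (1 : ZMod 4) else 0) with hM
  have h1 : (regularOverpartitions j k N : ZMod 4) = coeff N (D * M) := by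
    rw [coeff_mul, Finset.Nat.sum_antidiagonal_eq_sum_range_succ_mk, regularOverpartitions]
    push_cast
    refine Finset.sum_congr rfl fun m _ => ?_
    rw [hD, hM, ← aux_distinct, ← aux_restr]
  have h2 : HasProd (fun i => if P (i+1) then 1 + 2 * auxS (i+1) else 1) (D * M) := by
    refine HasProd.congr_fun ((Nat.Partition.hasProd_genFun
      (fun i c => if P i ∧ c = 1 then (1 : ZMod 4) else 0)).mul
      (Nat.Partition.hasProd_genFun (fun i _ => if P i then (1 : ZMod 4) else 0))) ?_
    intro i
    have e1 : ∑' j, (if P (i+1) ∧ j + 1 = 1 then (1 : ZMod 4) else 0) •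
        (X : (ZMod 4)⟦X⟧) ^ ((i+1) * (j + 1)) = if P (i+1) then X ^ (i+1) else 0 := by
      ext n
      rw [aux_coeff_tsum (fun i c => if P i ∧ c = 1 then (1 : ZMod 4) else 0)]
      by_cases hp : P (i+1)
      · simp only [hp, true_and, if_true, coeff_X_pow]
        by_cases hn : n = i + 1
        · simp [hn]
        · rw [if_neg hn]
          by_cases hd : i + 1 ∣ n ∧ n ≠ 0
          · rw [if_pos hd, if_neg]
            intro h
            exact hn (by simpa [h] using (Nat.div_mul_cancel hd.1).symm)
          · rw [if_neg hd]
      · simp [hp]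
    have e2 : ∑' j, (if P (i+1) then (1 : ZMod 4) else 0) •
        (X : (ZMod 4)⟦X⟧) ^ ((i+1) * (j + 1)) = if P (i+1) then auxS (i+1) else 0 := by
      ext n
      rw [aux_coeff_tsum (fun i _ => if P i then (1 : ZMod 4) else 0)]
      by_cases hp : P (i+1)
      · simp [hp, auxS]
      · simp [hp]
    rw [e1, e2]
    split_ifs
    · rw [auxS_mul _ (Nat.succ_ne_zero i)]
    · simp
  rw [h1]
  have h3 := (WithPiTopology.tendsto_iff_coeff_tendsto _ _ _ _).1 h2 N
  refine tendsto_nhds_unique h3 ?_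
  refine tendsto_atTop_of_eventually_const (i₀ := range N) (fun s (hs : s ≥ range N) => ?_)
  rw [aux_prod]
  have h2' : (2 : (ZMod 4)⟦X⟧) = C (2 : ZMod 4) := (map_ofNat (C (R := ZMod 4)) 2).symm
  rw [h2', map_add, coeff_C_mul, map_sum, coeff_one, if_neg hN, zero_add]
  congr 1
  have : ∀ i ∈ s, coeff N (if P (i+1) then auxS (i+1) else 0)
      = if P (i+1) ∧ (i+1) ∣ N then 1 else 0 := by
    intro i _
    by_cases hp : P (i+1) <;> simp [hp, auxS, hN]
  rw [Finset.sum_congr rfl this, ← Finset.sum_filter, Finset.sum_const, nsmul_one]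
  congr 1
  refine Finset.card_bij (fun i _ => i + 1) ?_ ?_ ?_
  · intro a ha
    simp only [Finset.mem_filter] at ha
    exact Finset.mem_filter.2 ⟨Nat.mem_divisors.2 ⟨ha.2.2, hN⟩, ha.2.1⟩
  · intro a _ b _ h
    omega
  · intro b hb
    simp only [Finset.mem_filter, Nat.mem_divisors] at hb
    obtain ⟨⟨hb1, _⟩, hb2⟩ := hb
    have hb0 : 0 < b := Nat.pos_of_dvd_of_pos hb1 (Nat.pos_of_ne_zero hN)
    have hle := Nat.le_of_dvd (Nat.pos_of_ne_zero hN) hb1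
    have hb' : b - 1 + 1 = b := by omega
    refine ⟨b - 1, ?_, hb'⟩
    simp only [Finset.mem_filter, hb']
    exact ⟨hs (Finset.mem_range.2 (by omega)), hb2, hb1⟩

theorem stmt_17 (p : ℕ) (hp : p.Prime) (hp5 : 5 ≤ p)
    (n α : ℕ) (j : ℕ) (hj1 : 1 ≤ j) (hjp : j ≤ p - 1) :
    4 ∣ regularOverpartitions 6 12 (p ^ (2 * α + 1) * (24 * (p * n + j) + p)) := by
  have hodd : Odd p := hp.odd_of_ne_two (by omega)
  have hN : p ^ (2 * α + 1) * (24 * (p * n + j) + p) ≠ 0 := by positivity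
  rw [← ZMod.natCast_eq_zero_iff, aux_main_s17 6 12 _ hN]
  have hNodd : Odd (p ^ (2 * α + 1) * (24 * (p * n + j) + p)) := by
    refine hodd.pow.mul ?_
    obtain ⟨k, hk⟩ := hodd
    exact ⟨12 * (p * n + j) + k, by omega⟩
  have hfil : (p ^ (2 * α + 1) * (24 * (p * n + j) + p)).divisors.filter
      (fun d => d % 12 ≠ 6) = (p ^ (2 * α + 1) * (24 * (p * n + j) + p)).divisors := by
    refine Finset.filter_true_of_mem fun d hd => ?_
    have := Nat.odd_iff.1 (Odd.of_dvd_nat hNodd (Nat.dvd_of_mem_divisors hd))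
    omega
  have hnd : ¬ p ∣ 24 * (p * n + j) + p := by
    intro h
    have h1 : p ∣ 24 * (p * n + j) := (Nat.dvd_add_left (dvd_refl p)).1 h
    rcases hp.dvd_mul.1 h1 with h2 | h2
    · have h3 : p ∣ 2 ^ 3 * 3 := by simpa using h2
      rcases hp.dvd_mul.1 h3 with h4 | h4
      · have := Nat.le_of_dvd (by norm_num) (hp.dvd_of_dvd_pow h4)
        omega
      · have := Nat.le_of_dvd (by norm_num) h4
        omega
    · have h3 : p ∣ j := (Nat.dvd_add_right (Dvd.intro n rfl)).1 h2
      have := Nat.le_of_dvd (by omega) h3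
      omega
  have hcop : Nat.Coprime (p ^ (2 * α + 1)) (24 * (p * n + j) + p) :=
    Nat.Coprime.pow_left _ ((Nat.Prime.coprime_iff_not_dvd hp).2 hnd)
  rw [hfil, hcop.card_divisors_mul, Nat.divisors_prime_pow hp, Finset.card_map,
    Finset.card_range]
  push_cast
  have h4 : (4 : ZMod 4) = 0 := rfl
  linear_combination ((α + 1 : ZMod 4) * ((24 * (p * n + j) + p).divisors.card : ZMod 4)) * h4
end

section
/- For all integers n ≥ 0 and α ≥ 0, the number of (6,12)-regular overpartitions satisfies p̄_{6,12}( 2^{2α+2} · (6n + 5) ) ≡ 0 (mod 8). -/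
open Finset

namespace RO

/-- theta partial sums without constant term -/
def A {Q : Type*} [CommRing Q] (n : ℕ) (q : Q) : Q :=
  ∑ j ∈ range n, (-1) ^ (j + 1) * q ^ ((j + 1) ^ 2)

/-- Shanks term -/
def T {Q : Type*} [CommRing Q] (q : Q) (n s : ℕ) : Q :=
  (-1) ^ s * q ^ (s * (n + 1)) * (∏ i ∈ Ico s n, (1 - q ^ (i + 1))) * ∏ i ∈ range s, (1 + q ^ i)

lemma shanks {Q : Type*} [CommRing Q] (q : Q) (n : ℕ) :
    (1 + 2 * A n q) * ∏ i ∈ range n, (1 + q ^ (i + 1)) = ∑ s ∈ range (n + 1), T q n s := by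
  induction n with
  | zero => simp [A, T]
  | succ n ih =>
    have hV : ∀ m ≤ n + 1, ∑ s ∈ range m, (T q (n + 1) s - (1 + q ^ (n + 1)) * T q n s) =
        (-1) ^ m * q ^ (m * (n + 1)) * (∏ i ∈ Ico m (n + 1), (1 - q ^ i)) *
          (∏ i ∈ range m, (1 + q ^ i)) := by
      intro m hm
      induction m with
      | zero =>
        have : ∏ i ∈ Ico 0 (n + 1), (1 - q ^ i) = 0 :=
          prod_eq_zero (i := 0) (by simp) (by simp)
        rw [this]; simp
      | succ m ihm =>
        rw [sum_range_succ, ihm (by omega)]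
        have h1 : ∏ i ∈ Ico m (n + 1), (1 - q ^ i) =
            (1 - q ^ m) * ∏ i ∈ Ico (m + 1) (n + 1), (1 - q ^ i) :=
          prod_eq_prod_Ico_succ_bot (by omega) _
        have h2 : ∏ i ∈ Ico m n, (1 - q ^ (i + 1)) = ∏ i ∈ Ico (m + 1) (n + 1), (1 - q ^ i) := by
          rw [prod_Ico_add' (fun i => 1 - q ^ i) m n 1]
        have h3 : ∏ i ∈ Ico m (n + 1), (1 - q ^ (i + 1)) =
            (∏ i ∈ Ico (m + 1) (n + 1), (1 - q ^ i)) * (1 - q ^ (n + 1)) := by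
          rw [prod_Ico_succ_top (by omega), h2]
        simp only [T]
        rw [h3, h2, h1, prod_range_succ]
        ring
    have h := hV (n + 1) le_rfl
    rw [sum_sub_distrib, ← mul_sum, ← ih] at h
    simp only [Ico_self, prod_empty] at h
    have hT : T q (n + 1) (n + 1) = (-1) ^ (n + 1) * q ^ ((n + 1) * (n + 2)) *
        ∏ i ∈ range (n + 1), (1 + q ^ i) := by simp [T]
    have hA : A (n + 1) q = A n q + (-1) ^ (n + 1) * q ^ ((n + 1) ^ 2) := by
      simp [A, sum_range_succ]
    have hP : ∏ i ∈ range (n + 1), (1 + q ^ i) = 2 * ∏ i ∈ range n, (1 + q ^ (i + 1)) := by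
      rw [prod_range_succ']; ring
    rw [sum_range_succ, hT, hA, prod_range_succ]
    rw [hP] at h ⊢
    linear_combination -h

lemma gauss {Q : Type*} [CommRing Q] (q : Q) (n : ℕ) (hq : q ^ (n + 1) = 0) :
    (1 + 2 * A n q) * ∏ i ∈ range n, (1 + q ^ (i + 1)) = ∏ i ∈ range n, (1 - q ^ (i + 1)) := by
  rw [shanks, sum_range_succ', sum_eq_zero]
  · simp only [T, range_eq_Ico]
    simp
  · intro i _
    have : q ^ ((i + 1) * (n + 1)) = 0 := by
      rw [mul_comm, pow_mul, hq, zero_pow (by omega)]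
    simp [T, this]

lemma split12 {Q : Type*} [CommRing Q] (f : ℕ → Q) (K : ℕ) :
    ∏ i ∈ range (12 * K), f (i + 1) =
      (∏ i ∈ range (12 * K), if (i + 1) % 12 ≠ 6 then f (i + 1) else 1) *
        ∏ k ∈ range K, f (12 * k + 6) := by
  induction K with
  | zero => simp
  | succ K ih =>
    rw [show 12 * (K + 1) = 12 * K + 12 by ring, prod_range_succ _ K]
    simp only [prod_range_add _ (12 * K) 12, ih]
    simp [prod_range_succ, add_assoc]
    ring

lemma split6 {Q : Type*} [CommRing Q] (f : ℕ → Q) (K : ℕ) :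
    ∏ i ∈ range (2 * K), f (6 * (i + 1)) =
      (∏ k ∈ range K, f (12 * k + 6)) * ∏ k ∈ range K, f (12 * (k + 1)) := by
  induction K with
  | zero => simp
  | succ K ih =>
    rw [show 2 * (K + 1) = 2 * K + 1 + 1 by ring]
    simp only [prod_range_succ, ih]
    rw [show 6 * (2 * K + 1) = 12 * K + 6 by ring, show 6 * (2 * K + 1 + 1) = 12 * (K + 1) by ring]
    ring

lemma four_sq {Q : Type*} [CommRing Q] (h8 : (8 : Q) = 0) (f : ℕ → Q) (n : ℕ) :
    4 * (∑ j ∈ range n, f j) ^ 2 = 4 * ∑ j ∈ range n, f j ^ 2 := by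
  induction n with
  | zero => simp
  | succ n ih =>
    rw [sum_range_succ, sum_range_succ]
    linear_combination ih + (∑ j ∈ range n, f j) * f n * h8

lemma key {Q : Type*} [CommRing Q] (h8 : (8 : Q) = 0) (x G : Q) (K : ℕ)
    (hx : x ^ (12 * K + 1) = 0)
    (hG : G * (∏ i ∈ range (12 * K), if (i + 1) % 12 ≠ 6 then 1 - x ^ (i + 1) else 1) =
      ∏ i ∈ range (12 * K), if (i + 1) % 12 ≠ 6 then 1 + x ^ (i + 1) else 1) :
    G = 1 + 2 * (A (2 * K) (x ^ 6) - A (12 * K) x - A K (x ^ 12)) +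
      4 * ((∑ j ∈ range (12 * K), x ^ (2 * (j + 1) ^ 2)) + A K (x ^ 12) * A K (x ^ 12)
        + A (12 * K) x * A K (x ^ 12)
        - A (2 * K) (x ^ 6) * A (12 * K) x - A (2 * K) (x ^ 6) * A K (x ^ 12)) := by
  have hnil : ∀ i, 0 < i → IsNilpotent (x ^ i) := fun i hi =>
    IsNilpotent.pow_of_pos ⟨_, hx⟩ (by omega)
  have hp : ∀ i, 0 < i → IsUnit (1 + x ^ i) := fun i hi => (hnil i hi).isUnit_one_add
  have hm : ∀ i, 0 < i → IsUnit (1 - x ^ i) := fun i hi => (hnil i hi).isUnit_one_sub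
  have hsq : 4 * A (12 * K) x ^ 2 = 4 * ∑ j ∈ range (12 * K), x ^ (2 * (j + 1) ^ 2) := by
    rw [A, four_sq h8]
    congr 1
    refine sum_congr rfl fun j _ => ?_
    rw [mul_pow, ← pow_mul, mul_comm (j + 1) 2, pow_mul, ← pow_mul, mul_comm 2 ((j + 1) ^ 2)]
    simp [pow_mul]
  have g1 := gauss x (12 * K) hx
  have g6 := gauss (x ^ 6) (2 * K) (by
    rw [← pow_mul, show 6 * (2 * K + 1) = 12 * K + 1 + 5 by ring, pow_add, hx, zero_mul])
  have g12 := gauss (x ^ 12) K (by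
    rw [← pow_mul, show 12 * (K + 1) = 12 * K + 1 + 11 by ring, pow_add, hx, zero_mul])
  simp only [← pow_mul] at g6 g12
  rw [split12 (fun i => 1 + x ^ i), split12 (fun i => 1 - x ^ i)] at g1
  rw [split6 (fun i => 1 + x ^ i), split6 (fun i => 1 - x ^ i), ← g12] at g6
  rw [← hG] at g1
  have u1 : IsUnit (∏ i ∈ range (12 * K), if (i + 1) % 12 ≠ 6 then 1 - x ^ (i + 1) else 1) := by
    refine (IsUnit.prod_iff).2 fun i _ => ?_
    split_ifs
    · exact hm _ (by omega)
    · exact isUnit_one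
  have u2 : IsUnit (∏ k ∈ range K, (1 + x ^ (12 * k + 6))) :=
    IsUnit.prod_iff.2 fun i _ => hp _ (by omega)
  have u3 : IsUnit (∏ k ∈ range K, (1 + x ^ (12 * (k + 1)))) :=
    IsUnit.prod_iff.2 fun i _ => hp _ (by omega)
  generalize (∏ i ∈ range (12 * K), if (i + 1) % 12 ≠ 6 then 1 - x ^ (i + 1) else 1) = Im at *
  generalize (∏ k ∈ range K, (1 + x ^ (12 * k + 6))) = Ep at *
  generalize (∏ k ∈ range K, (1 - x ^ (12 * k + 6))) = Em at *
  generalize (∏ k ∈ range K, (1 + x ^ (12 * (k + 1)))) = Dp at *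
  rw [← sub_eq_zero] 
  generalize (∑ j ∈ range (12 * K), x ^ (2 * (j + 1) ^ 2)) = sq at *
  generalize A (12 * K) x = a at *
  generalize A (2 * K) (x ^ 6) = b at *
  generalize A K (x ^ 12) = c at *
  have e1 : (1 + 2 * a) * G * Ep = Em := u1.mul_left_cancel (by linear_combination g1)
  have e2 : (1 + 2 * b) * Ep = Em * (1 + 2 * c) := u3.mul_left_cancel (by linear_combination g6)
  have e3 : G * (1 + 2 * a) * (1 + 2 * c) = 1 + 2 * b :=
    u2.mul_left_cancel (by linear_combination (1 + 2 * c) * e1 - e2)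
  have ha : (1 + 2 * a) * (1 - 2 * a + 4 * a ^ 2) = 1 := by linear_combination a ^ 3 * h8
  have hc : (1 + 2 * c) * (1 - 2 * c + 4 * c ^ 2) = 1 := by linear_combination c ^ 3 * h8
  have e4 : G = (1 + 2 * b) * ((1 - 2 * a + 4 * a ^ 2) * (1 - 2 * c + 4 * c ^ 2)) := by
    rw [← e3]
    linear_combination (-G) * ha - G * ((1 + 2 * a) * (1 - 2 * a + 4 * a ^ 2)) * hc
  rw [e4]
  linear_combination hsq + (a^2*b - a^2*c + 2*a^2*c^2 + a*b*c - a*c^2 + b*c^2 - 2*a^2*b*c+4*a^2*b*c^2 - 2*a*b*c^2) * h8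

section series
open PowerSeries PowerSeries.WithPiTopology

lemma restricted_prod {R : Type*} [CommRing R] [TopologicalSpace R] [T2Space R]
    [IsTopologicalRing R] (M : ℕ) (P : ℕ → Prop) [DecidablePred P] :
    (PowerSeries.mk fun n ↦ (#(Nat.Partition.restricted n (fun i => P i ∧ i ≤ M)) : R)) *
      (∏ i ∈ range M, if P (i + 1) then 1 - X ^ (i + 1) else 1) = 1 := by
  have h := Nat.Partition.powerSeriesMk_card_restricted_eq_tprod R (fun i => P i ∧ i ≤ M)
  rw [tprod_eq_prod (s := range M)] at h
  · rw [h, ← prod_mul_distrib]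
    refine prod_eq_one fun i hi => ?_
    have hi' : i + 1 ≤ M := by simpa using hi
    by_cases hP : P (i + 1)
    · simp only [hP, hi', and_self, if_true, pow_mul]
      exact tsum_pow_mul_one_sub_of_constantCoeff_eq_zero (by simp)
    · simp [hP]
  · intro i hi
    have hi' : ¬ (i + 1 ≤ M) := by simpa using hi
    simp [hi']

lemma distinct_prod {R : Type*} [CommRing R] [TopologicalSpace R] [T2Space R]
    (M : ℕ) (P : ℕ → Prop) [DecidablePred P] :
    (PowerSeries.mk fun n ↦ (#((Nat.Partition.distincts n).filter
        (fun lam => ∀ i ∈ lam.parts, P i ∧ i ≤ M)) : R)) =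
      (∏ i ∈ range M, if P (i + 1) then 1 + X ^ (i + 1) else 1) := by
  have h := Nat.Partition.genFun_eq_tprod
    (fun i c ↦ if (P i ∧ i ≤ M) ∧ c < 2 then (1 : R) else 0)
  have hs : ∀ i, (∑' j, (if (P (i + 1) ∧ i + 1 ≤ M) ∧ j + 1 < 2 then (1 : R) else 0) •
      (X : R⟦X⟧) ^ ((i + 1) * (j + 1))) =
      if (P (i + 1) ∧ i + 1 ≤ M) then X ^ (i + 1) else 0 := by
    intro i
    rw [tsum_eq_single 0]
    · simp
    · intro j hj
      rw [if_neg (by omega)]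
      simp
  simp only [hs] at h
  rw [tprod_eq_prod (s := range M)] at h
  · trans Nat.Partition.genFun (fun i c ↦ if (P i ∧ i ≤ M) ∧ c < 2 then (1 : R) else 0)
    · simp_rw [Nat.Partition.genFun, Nat.Partition.distincts, filter_filter, card_filter,
        Finsupp.prod, prod_boole]
      ext n
      simp only [coeff_mk, Nat.cast_sum]
      refine sum_congr rfl fun p _ => ?_
      push_cast
      congr 1
      simp only [Multiset.toFinsupp_support, Multiset.mem_toFinset, Multiset.toFinsupp_apply,
        Multiset.nodup_iff_count_le_one, eq_iff_iff]
      constructor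
      · rintro ⟨h1, h2⟩ i hi
        exact ⟨h2 i hi, by have := h1 i; omega⟩
      · intro h1
        refine ⟨fun i => ?_, fun i hi => (h1 i hi).1⟩
        by_cases hi : i ∈ p.parts
        · have := (h1 i hi).2; omega
        · simp [Multiset.count_eq_zero_of_notMem hi]
    · rw [h]
      refine prod_congr rfl fun i hi => ?_
      have hi' : i + 1 ≤ M := by simpa using hi
      by_cases hP : P (i + 1) <;> simp [hP, hi']
  · intro i hi
    have hi' : ¬ (i + 1 ≤ M) := by simpa using hi
    simp [hi']

lemma ro_coeff {R : Type*} [CommRing R] (M N : ℕ) (h : N ≤ M) (j k : ℕ) :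
    (regularOverpartitions j k N : R) =
    coeff N ((PowerSeries.mk fun n ↦ (#((Nat.Partition.distincts n).filter
        (fun lam => ∀ i ∈ lam.parts, i % k ≠ j ∧ i ≤ M)) : R)) *
      (PowerSeries.mk fun n ↦
        (#(Nat.Partition.restricted n (fun i => i % k ≠ j ∧ i ≤ M)) : R))) := by
  have hle : ∀ m ≤ N, ∀ p : Nat.Partition m, (∀ i ∈ p.parts, i % k ≠ j ∧ i ≤ M) ↔
      ∀ i ∈ p.parts, i % k ≠ j := by
    intro m hm p
    refine forall₂_congr fun i hi => and_iff_left ?_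
    have := Multiset.single_le_sum (fun x _ => Nat.zero_le x) i hi
    rw [p.parts_sum] at this
    omega
  rw [coeff_mul, Nat.sum_antidiagonal_eq_sum_range_succ_mk, regularOverpartitions]
  push_cast
  refine sum_congr rfl fun m hm => ?_
  have hm' : m ≤ N := by simpa [Nat.lt_succ_iff] using hm
  simp only [coeff_mk, Nat.Partition.restricted]
  simp only [hle m hm', hle (N - m) (Nat.sub_le _ _)]

lemma cz {R : Type*} [CommRing R] (N a n : ℕ) (ha : ∀ j, N ≠ a * j ^ 2) :
    coeff N (A n (X ^ a : R⟦X⟧)) = 0 := by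
  rw [A, map_sum]
  refine sum_eq_zero fun j _ => ?_
  rw [← pow_mul, show ((-1 : R⟦X⟧) ^ (j + 1)) = C ((-1) ^ (j + 1)) by simp, coeff_C_mul,
    coeff_X_pow, if_neg (ha _), mul_zero]

lemma cz2 {R : Type*} [CommRing R] (N a b n m : ℕ) (ha : ∀ j k, N ≠ a * j ^ 2 + b * k ^ 2) :
    coeff N (A n (X ^ a : R⟦X⟧) * A m (X ^ b : R⟦X⟧)) = 0 := by
  rw [A, A, sum_mul_sum, map_sum]
  refine sum_eq_zero fun j _ => ?_
  rw [map_sum]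
  refine sum_eq_zero fun k _ => ?_
  rw [← pow_mul, ← pow_mul, mul_mul_mul_comm, ← pow_add, ← pow_add,
    show ∀ t, ((-1 : R⟦X⟧) ^ t) = C ((-1) ^ t) by intro t; simp, coeff_C_mul,
    coeff_X_pow, if_neg (ha _ _), mul_zero]

lemma main (N : ℕ) (h3 : N % 3 = 2) (h2 : ∀ j, N ≠ 2 * j ^ 2) :
    8 ∣ regularOverpartitions 6 12 N := by
  rw [← ZMod.natCast_eq_zero_iff, ro_coeff (12 * N) N (by omega) 6 12]
  let _ : TopologicalSpace (ZMod 8) := ⊥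
  have : DiscreteTopology (ZMod 8) := ⟨rfl⟩
  have hr := restricted_prod (R := ZMod 8) (12 * N) (fun i => i % 12 ≠ 6)
  have hd := distinct_prod (R := ZMod 8) (12 * N) (fun i => i % 12 ≠ 6)
  rw [hd]
  generalize (PowerSeries.mk fun n ↦
        (#(Nat.Partition.restricted n (fun i => i % 12 ≠ 6 ∧ i ≤ 12 * N)) : ZMod 8)) = F at *
  set D : (ZMod 8)⟦X⟧ := ∏ i ∈ range (12 * N), if (i + 1) % 12 ≠ 6 then 1 + X ^ (i + 1) else 1
    with hD
  let I : Ideal (ZMod 8)⟦X⟧ := Ideal.span {X ^ (12 * N + 1)}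
  let φ := Ideal.Quotient.mk I
  have h8 : (8 : (ZMod 8)⟦X⟧) = 0 := by
    have : (8 : ZMod 8) = 0 := by decide
    calc (8 : (ZMod 8)⟦X⟧) = C (8 : ZMod 8) := (map_ofNat C 8).symm
      _ = 0 := by rw [this, map_zero]
  have hx : φ X ^ (12 * N + 1) = 0 := by
    rw [← map_pow]
    exact Ideal.Quotient.eq_zero_iff_mem.2 (Ideal.mem_span_singleton_self _)
  have hA : ∀ n (q : (ZMod 8)⟦X⟧), φ (A n q) = A n (φ q) := by
    intro n q; simp [A]
  have hk := key (Q := (ZMod 8)⟦X⟧ ⧸ I) (by rw [← map_ofNat φ 8, h8, map_zero]) (φ X) (φ (D * F)) N hx (by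
    have : D * F * (∏ i ∈ range (12 * N), if (i + 1) % 12 ≠ 6 then 1 - X ^ (i + 1) else 1) = D := by
      rw [mul_assoc, hr, mul_one]
    have := congrArg φ this
    rw [map_mul φ (D * F), map_prod] at this
    rw [hD, map_prod] at this
    simpa only [apply_ite φ, map_one, map_sub, map_add, map_pow] using this)
  have hX1 : (X : (ZMod 8)⟦X⟧) = X ^ 1 := (pow_one _).symm
  have hk' : φ (D * F) = φ (1 + 2 * (A (2 * N) (X ^ 6) - A (12 * N) (X ^ 1) - A N (X ^ 12)) +
      4 * ((∑ j ∈ range (12 * N), X ^ (2 * (j + 1) ^ 2)) + A N (X ^ 12) * A N (X ^ 12)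
        + A (12 * N) (X ^ 1) * A N (X ^ 12)
        - A (2 * N) (X ^ 6) * A (12 * N) (X ^ 1) - A (2 * N) (X ^ 6) * A N (X ^ 12))) := by
    rw [hk]
    have f2 : φ 2 = 2 := map_ofNat φ 2
    have f4 : φ 4 = 4 := map_ofNat φ 4
    simp [hA, f2, f4]
  rw [Ideal.Quotient.eq, Ideal.mem_span_singleton, X_pow_dvd_iff] at hk'
  have hc := hk' N (by omega)
  rw [map_sub, sub_eq_zero] at hc
  rw [hc]
  have hsq : ∀ j : ℕ, j ^ 2 % 3 ≠ 2 := by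
    intro j
    rw [Nat.pow_mod]
    have : j % 3 < 3 := Nat.mod_lt _ (by norm_num)
    interval_cases j % 3 <;> norm_num
  have hS : coeff N (∑ j ∈ range (12 * N), (X : (ZMod 8)⟦X⟧) ^ (2 * (j + 1) ^ 2)) = 0 := by
    rw [map_sum]
    refine sum_eq_zero fun j _ => ?_
    rw [coeff_X_pow, if_neg (h2 _)]
  have e2 : (2 : (ZMod 8)⟦X⟧) = C 2 := (map_ofNat C 2).symm
  have e4 : (4 : (ZMod 8)⟦X⟧) = C 4 := (map_ofNat C 4).symm
  rw [e2, e4]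
  simp only [map_add, map_sub, coeff_C_mul, hS]
  rw [cz N 6 _ (fun j => by omega), cz N 1 _ (fun j => by have := hsq j; omega),
    cz N 12 _ (fun j => by omega), cz2 N 12 12 _ _ (fun j k => by omega),
    cz2 N 1 12 _ _ (fun j k => by have := hsq j; omega),
    cz2 N 6 1 _ _ (fun j k => by have := hsq k; omega),
    cz2 N 6 12 _ _ (fun j k => by omega), coeff_one, if_neg (by omega)]
  simp

end series

end RO

theorem stmt_18 (n α : ℕ) :
    8 ∣ regularOverpartitions 6 12 (2 ^ (2 * α + 2) * (6 * n + 5)) := by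
  apply RO.main
  · have : 2 ^ (2 * α + 2) % 3 = 1 := by
      rw [show 2 * α + 2 = 2 * (α + 1) by ring, pow_mul, Nat.pow_mod]
      simp
    rw [Nat.mul_mod, this]
    omega
  · intro j hj
    induction α generalizing j with
    | zero =>
      have : j ^ 2 = 2 * (6 * n + 5) := by omega
      have he : Even (j ^ 2) := ⟨6 * n + 5, by omega⟩
      obtain ⟨c, rfl⟩ := (Nat.even_pow.1 he).1
      have : (c + c) ^ 2 = 4 * c ^ 2 := by ring
      omega
    | succ a ih =>
      have h0 : 2 ^ (2 * (a + 1) + 2) * (6 * n + 5) = 4 * (2 ^ (2 * a + 2) * (6 * n + 5)) := by ring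
      rw [h0] at hj
      have he : Even (j ^ 2) := ⟨2 ^ (2 * a + 2) * (6 * n + 5), by omega⟩
      obtain ⟨c, rfl⟩ := (Nat.even_pow.1 he).1
      have : (c + c) ^ 2 = 4 * c ^ 2 := by ring
      exact ih c (by omega)
end

section
/- For all integers n ≥ 0, α ≥ 0, β ≥ 0, every j ∈ {0, 2, 3, 4} and every k ∈ {0, 1, 3, 4, 5, 6}, the number of (8,16)-regular overpartitions satisfies both p̄_{8,16}( 8 · 5^{2α+1} · 7^{2β} · (5n + j) + 7 · 5^{2α+1} · 7^{2β} ) ≡ 0 (mod 16) and p̄_{8,16}( 8 · 5^{2α} · 7^{2β+1} · (7n + k) + 5 · 5^{2α} · 7^{2β+1} ) ≡ 0 (mod 16). -/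
namespace S19
open PowerSeries Finset Filter
open scoped PowerSeries.WithPiTopology

/-! ### Finite Gauss identity (Shanks) -/

lemma tele {S : Type*} [CommRing S] (y : S) (r g : ℕ → S) (hr0 : r 0 = 1)
    (hg : ∀ s, g s * (1 - y ^ (s + 1)) = r s) (hr : ∀ s, r (s + 1) = g s * (1 + y ^ (s + 1)))
    (n m : ℕ) :
    (1 - y ^ n) * (1 + ∑ s ∈ range m, 2 * (-1) ^ (s + 1) * g s * y ^ ((s + 1) * (n + 1)))
      - (1 + y ^ n) * (1 + ∑ s ∈ range m, 2 * (-1) ^ (s + 1) * g s * y ^ ((s + 1) * n))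
      = -2 * (-1) ^ m * r m * y ^ ((m + 1) * n) := by
  induction m with
  | zero => simp [hr0]; ring
  | succ m ih =>
    rw [sum_range_succ, sum_range_succ]
    have h1 := hg m
    have h2 := hr m
    rw [h2]
    rw [← h1] at ih
    have e1 : y ^ ((m + 1) * (n + 1)) = y ^ ((m + 1) * n) * y ^ (m + 1) := by ring
    have e2 : y ^ ((m + 1 + 1) * n) = y ^ ((m + 1) * n) * y ^ n := by ring
    rw [e1, e2]
    rw [pow_succ (-1 : S) m]
    linear_combination ih

lemma shanks {S : Type*} [CommRing S] (y : S) (r g P Q : ℕ → S) (hr0 : r 0 = 1)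
    (hg : ∀ s, g s * (1 - y ^ (s + 1)) = r s) (hr : ∀ s, r (s + 1) = g s * (1 + y ^ (s + 1)))
    (hP0 : P 0 = 1) (hQ0 : Q 0 = 1) (hP : ∀ s, P (s + 1) = P s * (1 - y ^ (s + 1)))
    (hQ : ∀ s, Q (s + 1) = Q s * (1 + y ^ (s + 1))) (hPr : ∀ s, P s * r s = Q s) (n : ℕ) :
    Q n * (1 + ∑ s ∈ range n, 2 * (-1) ^ (s + 1) * y ^ ((s + 1) ^ 2)) =
    P n * (1 + ∑ s ∈ range n, 2 * (-1) ^ (s + 1) * g s * y ^ ((s + 1) * (n + 1))) := by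
  induction n with
  | zero => simp [hP0, hQ0]
  | succ n ih =>
    have t := tele y r g hr0 hg hr (n + 1) n
    have h1 := hg n
    have h3 := hPr n
    rw [sum_range_succ, sum_range_succ, hP, hQ]
    have e1 : y ^ ((n + 1) * (n + 1 + 1)) = y ^ ((n + 1) ^ 2) * y ^ (n + 1) := by ring
    have e2 : y ^ ((n + 1) * (n + 1)) = y ^ ((n + 1) ^ 2) := by ring
    rw [e2] at t
    rw [e1]
    rw [pow_succ (-1 : S) n]
    linear_combination (1 + y ^ (n + 1)) * ih - P n * t - 2 * (-1) ^ n * y ^ ((n + 1) ^ 2) * (1 + y ^ (n + 1)) * (-h3) + 2 * (-1) ^ n * y ^ ((n + 1) ^ 2) * y ^ (n + 1) * P n * h1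

/-! ### Infinite products -/

lemma tendsto_ord (f : ℕ → ℤ⟦X⟧) (h : ∀ i, X ^ i ∣ f i) :
    Tendsto (fun i ↦ (f i).order) atTop (nhds ⊤) := by
  refine ENat.tendsto_nhds_top_iff_natCast_lt.mpr (fun n ↦ eventually_atTop.mpr ⟨n + 1, ?_⟩)
  intro m hm
  have : (m : ℕ∞) ≤ (f m).order := nat_le_order _ _ (X_pow_dvd_iff.mp (h m))
  refine lt_of_lt_of_le ?_ this
  exact_mod_cast hm

lemma mult1 (f : ℕ → ℤ⟦X⟧) (h : ∀ i, X ^ i ∣ f i) : Multipliable (fun i ↦ 1 + f i) :=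
  WithPiTopology.multipliable_one_add_of_tendsto_order_atTop_nhds_top _ (tendsto_ord f h)

lemma summ1 (f : ℕ → ℤ⟦X⟧) (h : ∀ i, X ^ i ∣ f i) : Summable f :=
  WithPiTopology.summable_of_tendsto_order_atTop_nhds_top _ (tendsto_ord f h)

lemma dvd_aux {y : ℤ⟦X⟧} (hy : X ∣ y) {i j : ℕ} (h : i ≤ j) : X ^ i ∣ y ^ j :=
  (pow_dvd_pow _ h).trans (pow_dvd_pow_of_dvd hy j)

noncomputable def E (y : ℤ⟦X⟧) : ℤ⟦X⟧ := ∏' i : ℕ, (1 + -y ^ (i + 1))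
noncomputable def G (y : ℤ⟦X⟧) : ℤ⟦X⟧ := ∏' i : ℕ, (1 + y ^ (i + 1))
noncomputable def Om (y : ℤ⟦X⟧) : ℤ⟦X⟧ := ∏' i : ℕ, (1 + -y ^ (2 * i + 1))
noncomputable def Op (y : ℤ⟦X⟧) : ℤ⟦X⟧ := ∏' i : ℕ, (1 + y ^ (2 * i + 1))
noncomputable def T (y : ℤ⟦X⟧) : ℤ⟦X⟧ := 1 + ∑' s : ℕ, 2 * (-1) ^ (s + 1) * y ^ ((s + 1) ^ 2)

lemma multE {y : ℤ⟦X⟧} (hy : X ∣ y) : Multipliable fun i : ℕ ↦ (1 + -y ^ (i + 1)) :=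
  mult1 _ fun _ ↦ (dvd_aux hy (by omega)).neg_right
lemma multG {y : ℤ⟦X⟧} (hy : X ∣ y) : Multipliable fun i : ℕ ↦ (1 + y ^ (i + 1)) :=
  mult1 _ fun _ ↦ (dvd_aux hy (by omega))
lemma multOm {y : ℤ⟦X⟧} (hy : X ∣ y) : Multipliable fun i : ℕ ↦ (1 + -y ^ (2 * i + 1)) :=
  mult1 _ fun _ ↦ (dvd_aux hy (by omega)).neg_right
lemma multOp {y : ℤ⟦X⟧} (hy : X ∣ y) : Multipliable fun i : ℕ ↦ (1 + y ^ (2 * i + 1)) :=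
  mult1 _ fun _ ↦ (dvd_aux hy (by omega))

lemma tprod_ne (f : ℕ → ℤ⟦X⟧) (h : ∀ i, X ∣ f i) (h' : Multipliable (fun i ↦ 1 + f i)) :
    ∏' i, (1 + f i) ≠ 0 := by
  intro h0
  have h1 := congrArg (constantCoeff (R := ℤ)) h0
  rw [h'.map_tprod _ (WithPiTopology.continuous_constantCoeff ℤ)] at h1
  have : ∀ i, constantCoeff (f i) = 0 := fun i ↦ X_dvd_iff.mp (h i)
  simp [this] at h1

lemma E_ne {y : ℤ⟦X⟧} (hy : X ∣ y) : E y ≠ 0 :=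
  tprod_ne _ (fun i ↦ (dvd_pow hy (by omega)).neg_right) (multE hy)
lemma G_ne {y : ℤ⟦X⟧} (hy : X ∣ y) : G y ≠ 0 :=
  tprod_ne _ (fun i ↦ (dvd_pow hy (by omega))) (multG hy)
lemma Om_ne {y : ℤ⟦X⟧} (hy : X ∣ y) : Om y ≠ 0 :=
  tprod_ne _ (fun i ↦ (dvd_pow hy (by omega)).neg_right) (multOm hy)
lemma Op_ne {y : ℤ⟦X⟧} (hy : X ∣ y) : Op y ≠ 0 :=
  tprod_ne _ (fun i ↦ (dvd_pow hy (by omega))) (multOp hy)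

lemma E_split {y : ℤ⟦X⟧} (hy : X ∣ y) : E y = Om y * E (y ^ 2) := by
  have h2 : X ∣ y ^ 2 := dvd_pow hy (by omega)
  unfold E Om
  rw [← tprod_even_mul_odd (f := fun i ↦ (1 + -y ^ (i + 1))) (multOm hy)]
  · congr 1
    refine tprod_congr fun i ↦ ?_
    rw [← pow_mul]; congr 3
  · convert multE h2 using 4
    rw [← pow_mul]; congr 1

lemma G_split {y : ℤ⟦X⟧} (hy : X ∣ y) : G y = Op y * G (y ^ 2) := by
  have h2 : X ∣ y ^ 2 := dvd_pow hy (by omega)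
  unfold G Op
  rw [← tprod_even_mul_odd (f := fun i ↦ (1 + y ^ (i + 1))) (multOp hy)]
  · congr 1
    refine tprod_congr fun i ↦ ?_
    rw [← pow_mul]; congr 2
  · convert multG h2 using 3
    rw [← pow_mul]; congr 1

lemma Om_neg (y : ℤ⟦X⟧) : Om (-y) = Op y := by
  unfold Om Op
  refine tprod_congr fun i ↦ ?_
  rw [Odd.neg_pow ⟨i, rfl⟩, neg_neg]

lemma Op_neg (y : ℤ⟦X⟧) : Op (-y) = Om y := by
  rw [← Om_neg, neg_neg]

lemma summT {y : ℤ⟦X⟧} (hy : X ∣ y) :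
    Summable fun s : ℕ ↦ 2 * (-1) ^ (s + 1) * y ^ ((s + 1) ^ 2) :=
  summ1 _ fun i ↦ (dvd_aux hy (by nlinarith)).mul_left _

lemma gauss {y : ℤ⟦X⟧} (hy : X ∣ y) : G y * T y = E y := by
  have hy0 : constantCoeff y = 0 := X_dvd_iff.mp hy
  set P : ℕ → ℤ⟦X⟧ := fun n ↦ ∏ i ∈ range n, (1 + -y ^ (i + 1)) with hP
  set Q : ℕ → ℤ⟦X⟧ := fun n ↦ ∏ i ∈ range n, (1 + y ^ (i + 1)) with hQ
  have hinv : ∀ n, P n * invOfUnit (P n) 1 = 1 := by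
    intro n
    apply mul_invOfUnit
    simp [hP, hy0, map_prod]
  have hPs : ∀ n, P (n + 1) = P n * (1 - y ^ (n + 1)) := by
    intro n; simp only [hP, prod_range_succ]; ring
  have hQs : ∀ n, Q (n + 1) = Q n * (1 + y ^ (n + 1)) := by
    intro n; simp only [hQ, prod_range_succ]
  set r : ℕ → ℤ⟦X⟧ := fun n ↦ Q n * invOfUnit (P n) 1 with hr
  set g : ℕ → ℤ⟦X⟧ := fun n ↦ Q n * invOfUnit (P (n + 1)) 1 with hg
  have sh := shanks y r g P Q
    (by
      have := hinv 0
      have h0 : P 0 = 1 := by simp [hP]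
      have h1 : Q 0 = 1 := by simp [hQ]
      rw [h0, one_mul] at this
      simp [hr, h0, h1, this])
    (by
      intro s
      have h1 := hinv s
      have h2 := hinv (s + 1)
      have h3 := hPs s
      simp only [hr, hg]
      rw [h3] at h2 ⊢
      linear_combination (Q s * invOfUnit (P s) 1) * h2 - Q s * (1 - y ^ (s + 1)) * invOfUnit (P s * (1 - y ^ (s + 1))) 1 * h1)
    (by intro s; simp only [hr, hg]; rw [hQs]; ring)
    (by simp [hP]) (by simp [hQ]) hPs hQs
    (by intro s; simp only [hr]; linear_combination Q s * hinv s)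
  have tQ : Tendsto Q atTop (nhds (G y)) := (multG hy).hasProd.tendsto_prod_nat
  have tP : Tendsto P atTop (nhds (E y)) := (multE hy).hasProd.tendsto_prod_nat
  have tT : Tendsto (fun n ↦ 1 + ∑ s ∈ range n, 2 * (-1) ^ (s + 1) * y ^ ((s + 1) ^ 2)) atTop
      (nhds (T y)) := (summT hy).hasSum.tendsto_sum_nat.const_add 1
  have tQT := (tQ.mul tT).sub tP
  have t0 : Tendsto (fun n ↦ Q n * (1 + ∑ s ∈ range n, 2 * (-1) ^ (s + 1) * y ^ ((s + 1) ^ 2)) - P n)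
      atTop (nhds 0) := by
    rw [WithPiTopology.tendsto_iff_coeff_tendsto]
    intro d
    apply tendsto_atTop_of_eventually_const (i₀ := d)
    intro n hn
    rw [sh n, mul_add, mul_one, add_sub_cancel_left, map_zero]
    have : X ^ (n + 1) ∣ P n * ∑ s ∈ range n, 2 * (-1) ^ (s + 1) * g s * y ^ ((s + 1) * (n + 1)) := by
      apply Dvd.dvd.mul_left
      apply dvd_sum
      intro s _
      exact (dvd_aux hy (by nlinarith)).mul_left _
    exact X_pow_dvd_iff.mp this d (by omega)
  exact sub_eq_zero.mp (tendsto_nhds_unique tQT t0)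

lemma T_mul_neg {y : ℤ⟦X⟧} (hy : X ∣ y) : T y * T (-y) = T (y ^ 2) ^ 2 := by
  have hn : X ∣ -y := hy.neg_right
  have h2 : X ∣ y ^ 2 := dvd_pow hy (by omega)
  have a1 := gauss hy
  have a2 := gauss hn
  have a3 := gauss h2
  rw [E_split hy, G_split hy] at a1
  rw [E_split hn, G_split hn, Om_neg, Op_neg, neg_sq] at a2
  have hne : Op y * Om y * G (y ^ 2) ^ 2 ≠ 0 :=
    mul_ne_zero (mul_ne_zero (Op_ne hy) (Om_ne hy)) (pow_ne_zero _ (G_ne h2))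
  apply mul_left_cancel₀ hne
  rw [← a3] at a1 a2
  linear_combination (Om y * G (y ^ 2) * T (-y)) * a1 + Om y * (G (y ^ 2) * T (y ^ 2)) * a2

/-! ### The generating function -/

noncomputable def Pser : ℤ⟦X⟧ := mk fun n ↦ (regularOverpartitions 8 16 n : ℤ)

noncomputable def M1 : ℤ⟦X⟧ := mk fun n ↦
  (((Nat.Partition.distincts n).filter (fun lam => ∀ i ∈ lam.parts, i % 16 ≠ 8)).card : ℤ)

noncomputable def M2 : ℤ⟦X⟧ := mk fun n ↦
  ((Nat.Partition.restricted n (fun i => i % 16 ≠ 8)).card : ℤ)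

lemma Pser_eq : Pser = M1 * M2 := by
  ext n
  rw [coeff_mul, Nat.sum_antidiagonal_eq_sum_range_succ_mk]
  simp only [Pser, M1, M2, coeff_mk, regularOverpartitions, Nat.Partition.restricted]
  push_cast
  rfl

lemma hasProd_M2 : HasProd
    (fun i : ℕ ↦ if (i + 1) % 16 ≠ 8 then ∑' j : ℕ, (X : ℤ⟦X⟧) ^ ((i + 1) * j) else 1) M2 :=
  Nat.Partition.hasProd_powerSeriesMk_card_restricted ℤ (fun i => i % 16 ≠ 8)

lemma hasProd_M1 : HasProd
    (fun i : ℕ ↦ if (i + 1) % 16 ≠ 8 then 1 + (X : ℤ⟦X⟧) ^ (i + 1) else 1) M1 := by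
  convert! Nat.Partition.hasProd_genFun (fun i c ↦ if c < 2 ∧ i % 16 ≠ 8 then (1 : ℤ) else 0) using 1
  · ext1 i
    split_ifs with h
    · rw [tsum_eq_single 0]
      · simp [h, PowerSeries.smul_eq_C_mul]
      · intro b hb
        have : ¬ (b + 1 < 2) := by omega
        simp [this, PowerSeries.smul_eq_C_mul]
    · simp [h, PowerSeries.smul_eq_C_mul]
  · ext n
    rw [Nat.Partition.coeff_genFun, M1, coeff_mk, ← Nat.Partition.countRestricted_two]
    simp_rw [Nat.Partition.countRestricted, filter_filter, card_filter, Finsupp.prod, prod_boole]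
    push_cast
    refine sum_congr rfl fun p _ ↦ ?_
    congr 1
    simp only [Multiset.toFinsupp_support, Multiset.mem_toFinset, Multiset.toFinsupp_apply, eq_iff_iff]
    constructor
    · rintro ⟨h1, h2⟩ i hi
      exact ⟨h1 i hi, h2 i hi⟩
    · intro h
      exact ⟨fun i hi ↦ (h i hi).1, fun i hi ↦ (h i hi).2⟩

lemma M1_mul : M1 * Op (X ^ 8) = G X := by
  have hO : HasProd (fun i : ℕ ↦ if (i + 1) % 16 ≠ 8 then 1 else 1 + (X : ℤ⟦X⟧) ^ (i + 1))
      (Op (X ^ 8)) := by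
    have h := (multOp (y := X ^ 8) (dvd_pow_self _ (by omega))).hasProd
    have hinj : Function.Injective (fun m : ℕ ↦ 16 * m + 7) := fun a b h ↦ by
      simp only at h; omega
    refine (hinj.hasProd_iff ?_).mp ?_
    · intro x hx
      rw [if_pos]
      intro h8
      exact hx ⟨x / 16, by simp only; omega⟩
    · convert! h using 2 with i
      simp only [Function.comp]
      rw [if_neg (by omega), ← pow_mul]
      congr 2; ring
  have h := (hasProd_M1.mul hO).tprod_eq
  rw [← h]
  refine tprod_congr fun i ↦ ?_
  split_ifs <;> simp

lemma M2_mul : M2 * E X = Om (X ^ 8) := by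
  have hO : HasProd (fun i : ℕ ↦ if (i + 1) % 16 ≠ 8 then 1 else 1 + -(X : ℤ⟦X⟧) ^ (i + 1))
      (Om (X ^ 8)) := by
    have h := (multOm (y := X ^ 8) (dvd_pow_self _ (by omega))).hasProd
    have hinj : Function.Injective (fun m : ℕ ↦ 16 * m + 7) := fun a b h ↦ by
      simp only at h; omega
    refine (hinj.hasProd_iff ?_).mp ?_
    · intro x hx
      rw [if_pos]
      intro h8
      exact hx ⟨x / 16, by simp only; omega⟩
    · convert! h using 2 with i
      simp only [Function.comp]
      rw [if_neg (by omega), ← pow_mul]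
      congr 3; ring
  have h := (hasProd_M2.mul (multE (y := X) dvd_rfl).hasProd).tprod_eq
  unfold E
  rw [← h, ← hO.tprod_eq]
  refine tprod_congr fun i ↦ ?_
  split_ifs
  · simp_rw [pow_mul]
    rw [← sub_eq_add_neg]
    exact WithPiTopology.tsum_pow_mul_one_sub_of_constantCoeff_eq_zero (by simp)
  · simp

lemma Pser_T : Pser * T X * T (X ^ 16) = T (X ^ 8) := by
  have d1 : (X : ℤ⟦X⟧) ∣ X := dvd_rfl
  have d8 : (X : ℤ⟦X⟧) ∣ X ^ 8 := dvd_pow_self _ (by omega)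
  have d16 : (X : ℤ⟦X⟧) ∣ X ^ 16 := dvd_pow_self _ (by omega)
  have a1 := gauss d1
  have a8 := gauss d8
  have a16 := gauss d16
  have e8 := E_split d8
  have g8 := G_split d8
  rw [← pow_mul] at e8 g8
  norm_num at e8 g8
  have m1 := M1_mul
  have m2 := M2_mul
  rw [Pser_eq]
  have hne : G X * Op (X ^ 8) * G (X ^ 16) ≠ 0 :=
    mul_ne_zero (mul_ne_zero (G_ne d1) (Op_ne d8)) (G_ne d16)
  apply mul_left_cancel₀ hne
  rw [e8, g8] at a8
  linear_combination M1 * M2 * Op (X ^ 8) * E X * a16 + M1 * M2 * Op (X ^ 8) * G (X ^ 16) * T (X ^ 16) * a1 + M1 * Op (X ^ 8) * E (X ^ 16) * m2 + Om (X ^ 8) * E (X ^ 16) * m1 - G X * a8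

/-- The basic congruence identity. -/
lemma Pser_id : Pser * (T (X ^ 8) ^ 8 * T (X ^ 16) ^ 8) =
    T (-X) * T (-X ^ 2) ^ 2 * (T (-X ^ 4) ^ 4 * T (X ^ 8) * T (X ^ 16) ^ 7) := by
  have b1 := T_mul_neg (y := X) dvd_rfl
  have b2 := T_mul_neg (y := X ^ 2) (dvd_pow_self _ (by omega))
  have b4 := T_mul_neg (y := X ^ 4) (dvd_pow_self _ (by omega))
  rw [← pow_mul] at b2 b4
  norm_num at b2 b4
  have h := Pser_T
  have key : T (X ^ 8) ^ 8 = T X * T (-X) * T (-X ^ 2) ^ 2 * T (-X ^ 4) ^ 4 := by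
    calc T (X ^ 8) ^ 8 = (T (X ^ 8) ^ 2) ^ 4 := by ring
      _ = (T (X ^ 4) ^ 2) ^ 2 * T (-X ^ 4) ^ 4 := by rw [← b4]; ring
      _ = T (X ^ 2) ^ 2 * T (-X ^ 2) ^ 2 * T (-X ^ 4) ^ 4 := by rw [← b2]; ring
      _ = _ := by rw [← b1]
  rw [key]
  linear_combination (T (-X) * T (-X ^ 2) ^ 2 * T (-X ^ 4) ^ 4 * T (X ^ 16) ^ 7) * h

/-! ### Support modulo 4 -/

def Supp (r : ZMod 4) (f : ℤ⟦X⟧) : Prop := ∀ n : ℕ, (n : ZMod 4) ≠ r → coeff n f = 0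

lemma Supp.mul {r s : ZMod 4} {f g : ℤ⟦X⟧} (hf : Supp r f) (hg : Supp s g) :
    Supp (r + s) (f * g) := by
  intro n hn
  rw [coeff_mul]
  refine sum_eq_zero fun p hp ↦ ?_
  rw [HasAntidiagonal.mem_antidiagonal] at hp
  by_cases h1 : (p.1 : ZMod 4) = r
  · by_cases h2 : (p.2 : ZMod 4) = s
    · exact absurd (by rw [← hp]; push_cast; rw [h1, h2]) hn
    · rw [hg _ h2, mul_zero]
  · rw [hf _ h1, zero_mul]

lemma Supp.add {r : ZMod 4} {f g : ℤ⟦X⟧} (hf : Supp r f) (hg : Supp r g) :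
    Supp r (f + g) := by
  intro n hn
  rw [map_add, hf n hn, hg n hn, add_zero]

lemma supp_one : Supp 0 1 := by
  intro n hn
  rw [coeff_one, if_neg]
  rintro rfl
  simp at hn

lemma supp_two : Supp 0 2 := by
  have := supp_one.add supp_one
  rwa [one_add_one_eq_two] at this

lemma Supp.pow {f : ℤ⟦X⟧} (hf : Supp 0 f) (n : ℕ) : Supp 0 (f ^ n) := by
  induction n with
  | zero => simpa using supp_one
  | succ n ih => rw [pow_succ]; simpa using ih.mul hf

lemma supp_tsum {r : ZMod 4} {f : ℕ → ℤ⟦X⟧} (hs : Summable f) (hf : ∀ i, Supp r (f i)) :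
    Supp r (∑' i, f i) := by
  intro n hn
  rw [hs.map_tsum _ (WithPiTopology.continuous_coeff ℤ n)]
  simp [hf _ n hn]

lemma supp_X (m : ℕ) (r : ZMod 4) (h : (m : ZMod 4) = r) : Supp r (X ^ m) := by
  intro n hn
  rw [coeff_X_pow, if_neg]
  rintro rfl
  exact hn h

/-- `∑ X^(k(2s+1)^2)` -/
noncomputable def psi (k : ℕ) : ℤ⟦X⟧ := ∑' s : ℕ, X ^ (k * (2 * s + 1) ^ 2)
/-- `∑ X^(k(2s+2)^2)` -/
noncomputable def eps (k : ℕ) : ℤ⟦X⟧ := ∑' s : ℕ, X ^ (k * (2 * s + 2) ^ 2)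

lemma summ_psi {k : ℕ} (hk : 0 < k) : Summable fun s : ℕ ↦ (X : ℤ⟦X⟧) ^ (k * (2 * s + 1) ^ 2) :=
  summ1 _ fun i ↦ pow_dvd_pow _ (by nlinarith [Nat.mul_le_mul hk (le_refl ((2 * i + 1) ^ 2))])
lemma summ_eps {k : ℕ} (hk : 0 < k) : Summable fun s : ℕ ↦ (X : ℤ⟦X⟧) ^ (k * (2 * s + 2) ^ 2) :=
  summ1 _ fun i ↦ pow_dvd_pow _ (by nlinarith [Nat.mul_le_mul hk (le_refl ((2 * i + 2) ^ 2))])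

lemma T_neg_eq {k : ℕ} (hk : 0 < k) : T (-X ^ k) = 1 + 2 * eps k + 2 * psi k := by
  have hterm : ∀ s : ℕ, (2 * (-1) ^ (s + 1) * (-X ^ k) ^ ((s + 1) ^ 2) : ℤ⟦X⟧)
      = 2 * X ^ (k * (s + 1) ^ 2) := by
    intro s
    rw [neg_pow (X ^ k), ← pow_mul, mul_assoc, ← mul_assoc ((-1) ^ (s + 1)), ← pow_add]
    rw [Even.neg_one_pow, one_mul]
    have : s + 1 + (s + 1) ^ 2 = (s + 1) * (s + 1 + 1) := by ring
    rw [this]; exact Nat.even_mul_succ_self _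
  have hp : HasSum (fun s : ℕ ↦ (2 * X ^ (k * (2 * s + 1) ^ 2) : ℤ⟦X⟧)) (2 * psi k) :=
    (summ_psi hk).hasSum.mul_left 2
  have he : HasSum (fun s : ℕ ↦ (2 * X ^ (k * (2 * s + 2) ^ 2) : ℤ⟦X⟧)) (2 * eps k) :=
    (summ_eps hk).hasSum.mul_left 2
  unfold T
  rw [tsum_congr hterm,
    (HasSum.even_add_odd (f := fun s : ℕ ↦ (2 * X ^ (k * (s + 1) ^ 2) : ℤ⟦X⟧)) hp he).tsum_eq]
  ring

lemma supp_psi {k : ℕ} (hk : 0 < k) : Supp k (psi k) := by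
  refine supp_tsum (summ_psi hk) fun i ↦ supp_X _ _ ?_
  push_cast
  have h4 : (4 : ZMod 4) = 0 := by decide
  linear_combination ((k : ZMod 4) * (i ^ 2 + i)) * h4

lemma supp_eps {k : ℕ} (hk : 0 < k) : Supp 0 (eps k) := by
  refine supp_tsum (summ_eps hk) fun i ↦ supp_X _ _ ?_
  push_cast
  have h4 : (4 : ZMod 4) = 0 := by decide
  linear_combination ((k : ZMod 4) * (i + 1) ^ 2) * h4

lemma supp_T {y : ℤ⟦X⟧} (hy : X ∣ y) (h : Supp 0 y) : Supp 0 (T y) := by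
  refine supp_one.add (supp_tsum (summT hy) fun i ↦ ?_)
  have h1 : Supp 0 ((-1 : ℤ⟦X⟧) ^ (i + 1)) := by
    apply Supp.pow
    intro n hn
    rw [map_neg, supp_one n hn, neg_zero]
  simpa using (supp_two.mul h1).mul (h.pow _)

lemma T_odd {y : ℤ⟦X⟧} (hy : X ∣ y) : ∃ z, T y = 1 + 2 * z := by
  refine ⟨∑' s : ℕ, (-1) ^ (s + 1) * y ^ ((s + 1) ^ 2), ?_⟩
  unfold T
  have hs : Summable fun s : ℕ ↦ (-1) ^ (s + 1) * y ^ ((s + 1) ^ 2) :=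
    summ1 _ fun i ↦ (dvd_aux hy (by nlinarith)).mul_left _
  rw [← hs.tsum_mul_left]
  simp only [mul_assoc]

lemma coeff_psi_ne {k n : ℕ} (hk : 0 < k) (h : coeff n (psi k) ≠ 0) : ∃ a, n = k * a ^ 2 := by
  by_contra hc
  push Not at hc
  apply h
  unfold psi
  rw [(summ_psi hk).map_tsum _ (WithPiTopology.continuous_coeff ℤ n)]
  have : ∀ s : ℕ, coeff n ((X : ℤ⟦X⟧) ^ (k * (2 * s + 1) ^ 2)) = 0 := fun s ↦ by
    rw [coeff_X_pow, if_neg (hc _)]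
  simp [this]

lemma main_cong (N : ℕ) (hN : N % 4 = 3) (h : ∀ a b : ℕ, N ≠ a ^ 2 + 2 * b ^ 2) :
    16 ∣ regularOverpartitions 8 16 N := by
  have d8 : (X : ℤ⟦X⟧) ∣ X ^ 8 := dvd_pow_self _ (by omega)
  have d16 : (X : ℤ⟦X⟧) ∣ X ^ 16 := dvd_pow_self _ (by omega)
  have d4 : (X : ℤ⟦X⟧) ∣ -X ^ 4 := (dvd_pow_self _ (by omega)).neg_right
  have id := Pser_id
  have t1 := T_neg_eq (k := 1) one_pos
  have t2 := T_neg_eq (k := 2) two_pos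
  rw [pow_one] at t1
  rw [t1, t2] at id
  obtain ⟨z8, h8⟩ := T_odd d8
  obtain ⟨z16, h16⟩ := T_odd d16
  obtain ⟨z4, h4⟩ := T_odd d4
  have p8 : ∀ z : ℤ⟦X⟧, ∃ w, (1 + 2 * z) ^ 8 = 1 + 16 * w := fun z ↦
    ⟨z + 7 * z ^ 2 + 28 * z ^ 3 + 70 * z ^ 4 + 112 * z ^ 5 + 112 * z ^ 6 + 64 * z ^ 7 + 16 * z ^ 8,
      by ring⟩
  have podd : ∀ z : ℤ⟦X⟧, ∀ n : ℕ, ∃ w, (1 + 2 * z) ^ n = 1 + 2 * w := by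
    intro z n
    induction n with
    | zero => exact ⟨0, by simp⟩
    | succ n ih =>
      obtain ⟨w, hw⟩ := ih
      exact ⟨w + z + 2 * w * z, by rw [pow_succ, hw]; ring⟩
  obtain ⟨w8, hw8⟩ := p8 z8
  obtain ⟨w16, hw16⟩ := p8 z16
  have hW : Supp 0 (T (-X ^ 4) ^ 4 * T (X ^ 8) * T (X ^ 16) ^ 7) := by
    have s4 : Supp 0 (-X ^ 4) := by
      intro n hn
      rw [map_neg, supp_X 4 0 (by decide) n hn, neg_zero]
    have := (((supp_T d4 s4).pow 4).mul (supp_T d8 (supp_X 8 0 (by decide)))).mul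
      ((supp_T d16 (supp_X 16 0 (by decide))).pow 7)
    simpa using this
  have hWo : ∃ w, T (-X ^ 4) ^ 4 * T (X ^ 8) * T (X ^ 16) ^ 7 = 1 + 2 * w := by
    obtain ⟨u, hu⟩ := podd z4 4
    obtain ⟨v, hv⟩ := podd z16 7
    refine ⟨u + z8 + v + 2 * u * z8 + 2 * u * v + 2 * z8 * v + 4 * u * z8 * v, ?_⟩
    rw [h4, h8, h16, hu, hv]; ring
  generalize T (-X ^ 4) ^ 4 * T (X ^ 8) * T (X ^ 16) ^ 7 = W at *
  obtain ⟨w, hw⟩ := hWo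
  rw [h8, h16, hw8, hw16] at id
  have sA : Supp 0 (1 + 2 * eps 1) := supp_one.add (by simpa using supp_two.mul (supp_eps one_pos))
  have sB : Supp 0 (1 + 2 * eps 2) := supp_one.add (by simpa using supp_two.mul (supp_eps two_pos))
  have sp : Supp 1 (psi 1) := by simpa using supp_psi (k := 1) one_pos
  have sc : Supp 2 (psi 2) := by simpa using supp_psi (k := 2) two_pos
  set A := 1 + 2 * eps 1 with hA
  set B := 1 + 2 * eps 2 with hB
  set p := psi 1
  set c := psi 2
  have scc : Supp 0 (c * c) := by
    have := sc.mul sc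
    rwa [show (2 + 2 : ZMod 4) = 0 by decide] at this
  have hNz : (N : ZMod 4) = 3 := by
    rw [← ZMod.natCast_mod N 4, hN]; rfl
  have S0 : Supp 0 (A * (B * B + 2 * (2 * (c * c))) * W) := by
    have := (sA.mul (Supp.add (by simpa using sB.mul sB)
      (by simpa using supp_two.mul (supp_two.mul scc)))).mul hW
    simpa using this
  have S1 : Supp 1 (2 * p * (B * B + 2 * (2 * (c * c))) * W) := by
    have := ((supp_two.mul sp).mul (Supp.add (r := 0) (by simpa using sB.mul sB)
      (by simpa using supp_two.mul (supp_two.mul scc)))).mul hW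
    simpa using this
  have S2 : Supp 2 (2 * (2 * (A * B * c)) * W) := by
    have := (supp_two.mul (supp_two.mul ((sA.mul sB).mul sc))).mul hW
    simpa using this
  have hpc : coeff N (p * c) = 0 := by
    rw [coeff_mul]
    refine sum_eq_zero fun ij hij ↦ ?_
    rw [HasAntidiagonal.mem_antidiagonal] at hij
    by_contra hne
    obtain ⟨a, ha⟩ := coeff_psi_ne one_pos (left_ne_zero_of_mul hne)
    obtain ⟨b, hb⟩ := coeff_psi_ne two_pos (right_ne_zero_of_mul hne)
    exact h a b (by rw [← hij, ha, hb, one_mul])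
  have big : Pser = A * (B * B + 2 * (2 * (c * c))) * W + 2 * p * (B * B + 2 * (2 * (c * c))) * W
      + 2 * (2 * (A * B * c)) * W + (8 : ℤ) • (p * c)
      + (16 : ℤ) • (p * c * (eps 2 + w + 2 * eps 2 * w) - Pser * (w8 + w16 + 16 * w8 * w16)) := by
    have h16' : (8 : ℤ) • (p * c) = 8 * (p * c) := by simp [zsmul_eq_mul]
    have h16'' : ∀ f : ℤ⟦X⟧, (16 : ℤ) • f = 16 * f := fun f ↦ by simp [zsmul_eq_mul]
    rw [h16', h16'']
    have e : 8 * (p * c) * B * W = 8 * (p * c) + 16 * (p * c * (eps 2 + w + 2 * eps 2 * w)) := by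
      rw [hB, hw]; ring
    linear_combination id + e
  have hc := congrArg (coeff N) big
  simp only [map_add, map_zsmul] at hc
  rw [S0 N (by rw [hNz]; decide), S1 N (by rw [hNz]; decide), S2 N (by rw [hNz]; decide), hpc] at hc
  have hP : coeff N Pser = (regularOverpartitions 8 16 N : ℤ) := by simp [Pser]
  rw [hP] at hc
  have : (16 : ℤ) ∣ (regularOverpartitions 8 16 N : ℤ) := by
    rw [hc]
    simp only [mul_zero, add_zero, zero_add, smul_eq_mul]
    exact Dvd.intro _ rfl
  exact_mod_cast this

/-! ### Non-representability -/

lemma no_rep (p : ℕ) (hp : 0 < p) (hd : ∀ a b : ℕ, p ∣ a ^ 2 + 2 * b ^ 2 → p ∣ a ∧ p ∣ b)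
    (m : ℕ) (hm : ¬ p ∣ m) (α : ℕ) (a b : ℕ) : p ^ (2 * α + 1) * m ≠ a ^ 2 + 2 * b ^ 2 := by
  induction α generalizing a b with
  | zero =>
    intro h
    obtain ⟨⟨a', rfl⟩, ⟨b', rfl⟩⟩ := hd a b (h ▸ ⟨m, by ring⟩)
    apply hm
    refine ⟨a' ^ 2 + 2 * b' ^ 2, ?_⟩
    apply Nat.eq_of_mul_eq_mul_left hp
    rw [mul_zero, zero_add, pow_one] at h
    rw [h]; ring
  | succ α ih =>
    intro h
    obtain ⟨⟨a', rfl⟩, ⟨b', rfl⟩⟩ := hd a b (h ▸ ⟨p ^ (2 * α + 2) * m, by ring⟩)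
    apply ih a' b'
    apply Nat.eq_of_mul_eq_mul_left (show 0 < p ^ 2 by positivity)
    linarith [show p ^ 2 * (p ^ (2 * α + 1) * m) = p ^ (2 * (α + 1) + 1) * m by ring]

lemma hd5 (a b : ℕ) (h : 5 ∣ a ^ 2 + 2 * b ^ 2) : 5 ∣ a ∧ 5 ∣ b := by
  simp only [← ZMod.natCast_eq_zero_iff] at h ⊢
  push_cast at h
  generalize (a : ZMod 5) = x at *
  generalize (b : ZMod 5) = y at *
  revert x y; decide

lemma hd7 (a b : ℕ) (h : 7 ∣ a ^ 2 + 2 * b ^ 2) : 7 ∣ a ∧ 7 ∣ b := by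
  simp only [← ZMod.natCast_eq_zero_iff] at h ⊢
  push_cast at h
  generalize (a : ZMod 7) = x at *
  generalize (b : ZMod 7) = y at *
  revert x y; decide

end S19

theorem stmt_19 (n α β : ℕ) (j : ℕ) (hj : j ∈ ({0, 2, 3, 4} : Finset ℕ))
    (k : ℕ) (hk : k ∈ ({0, 1, 3, 4, 5, 6} : Finset ℕ)) :
    16 ∣ regularOverpartitions 8 16
        (8 * 5 ^ (2 * α + 1) * 7 ^ (2 * β) * (5 * n + j)
          + 7 * 5 ^ (2 * α + 1) * 7 ^ (2 * β)) ∧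
    16 ∣ regularOverpartitions 8 16
        (8 * 5 ^ (2 * α) * 7 ^ (2 * β + 1) * (7 * n + k)
          + 5 * 5 ^ (2 * α) * 7 ^ (2 * β + 1)) := by
  have h5 : (5 ^ (2 * α)) % 4 = 1 := by rw [pow_mul, Nat.pow_mod]; norm_num
  have h7 : (7 ^ (2 * β)) % 4 = 1 := by rw [pow_mul, Nat.pow_mod]; norm_num
  constructor
  · have e : 8 * 5 ^ (2 * α + 1) * 7 ^ (2 * β) * (5 * n + j) + 7 * 5 ^ (2 * α + 1) * 7 ^ (2 * β)
        = 5 ^ (2 * α + 1) * (7 ^ (2 * β) * (8 * (5 * n + j) + 7)) := by ring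
    apply S19.main_cong
    · rw [e, pow_succ, Nat.mul_mod, Nat.mul_mod (5 ^ (2 * α)), h5, Nat.mul_mod (7 ^ (2 * β)), h7,
        show (8 * (5 * n + j) + 7) % 4 = 3 by omega]
    · rw [e]
      apply S19.no_rep 5 (by omega) S19.hd5
      intro hdv
      rcases (Nat.Prime.dvd_mul (by norm_num)).mp hdv with h | h
      · have := (Nat.Prime.dvd_of_dvd_pow (by norm_num) h); omega
      · simp at hj; omega
  · have e : 8 * 5 ^ (2 * α) * 7 ^ (2 * β + 1) * (7 * n + k) + 5 * 5 ^ (2 * α) * 7 ^ (2 * β + 1)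
        = 7 ^ (2 * β + 1) * (5 ^ (2 * α) * (8 * (7 * n + k) + 5)) := by ring
    apply S19.main_cong
    · rw [e, pow_succ, Nat.mul_mod, Nat.mul_mod (7 ^ (2 * β)), h7, Nat.mul_mod (5 ^ (2 * α)), h5,
        show (8 * (7 * n + k) + 5) % 4 = 1 by omega]
    · rw [e]
      apply S19.no_rep 7 (by omega) S19.hd7
      intro hdv
      rcases (Nat.Prime.dvd_mul (by norm_num)).mp hdv with h | h
      · have := (Nat.Prime.dvd_of_dvd_pow (by norm_num) h); omega
      · simp at hk; omega
end
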